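/- There exists an absolute constant $c>0$ such that for every $n\ge 1$, every arrangement $\mathcal H=\{H_1,\dots,H_n\}$ of $n$ affine hyperplanes in general position in $\mathbb R^3$ (the intersection of any $k\le 3$ of them is an affine subspace of dimension $3-k$, and no $4$ of them have a common point) and every $\varepsilon\in(0,1)$, the following holds. Let $G$ be the chamber graph of $\mathcal H$: its vertices are the connected components (chambers) of $\mathbb R^3\setminus\bigcup_i H_i$, and two chambers are adjacent iff they share a common facet. The lazy simple random walk on $G$, with transition matrix $P=\tfrac12(I+D^{-1}A)$, where $A$ and $D$ are the adjacency and the diagonal degree matrix of $G$, and with stationary distribution $\pi(v)\propto\deg(v)$, has $\varepsilon$-mixing time $$t_{\mathrm{mix}}(\varepsilon):=\min\{t\in\mathbb Z_{\ge 0}:\max_x\|P^t(x,\cdot)-\pi\|_{\mathrm{TV}}\le\varepsilon\}\;\le\; c\,n^2\log\frac{n}{\varepsilon}.$$ -/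

import Mathlib

noncomputable section

/-- A family of `n` affine hyperplanes in Euclidean `d`-space, the `i`-th one being
`{x | ⟪normal i, x⟫ = offset i}`. -/
structure Arrangement (d n : ℕ) where
  normal : Fin n → EuclideanSpace ℝ (Fin d)
  offset : Fin n → ℝ
  normal_ne_zero : ∀ i, normal i ≠ 0

namespace Arrangement

variable {d n : ℕ} (𝓗 : Arrangement d n)

/-- The `i`-th hyperplane, as an affine subspace. -/
def hyperplane (i : Fin n) : AffineSubspace ℝ (EuclideanSpace ℝ (Fin d)) where
  carrier := {x | inner ℝ (𝓗.normal i) x = 𝓗.offset i}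
  smul_vsub_vadd_mem' := by
    intro c p₁ p₂ p₃ h₁ h₂ h₃
    simp only [Set.mem_ofPred_eq] at h₁ h₂ h₃ ⊢
    simp [inner_add_right, inner_smul_right, inner_sub_right, h₁, h₂, h₃]

/-- General position: any `k ≤ d` of the hyperplanes meet in a (nonempty) affine subspace of
dimension `d - k`, and no `d + 1` of them have a common point. For `d ≥ 1` this makes the
hyperplanes pairwise distinct. -/
def GeneralPosition : Prop :=
  (∀ A : Finset (Fin n), A.card ≤ d →
    ((⨅ i ∈ A, 𝓗.hyperplane i : AffineSubspace ℝ (EuclideanSpace ℝ (Fin d))) :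
      Set (EuclideanSpace ℝ (Fin d))).Nonempty ∧
    Module.finrank ℝ (⨅ i ∈ A, 𝓗.hyperplane i :
      AffineSubspace ℝ (EuclideanSpace ℝ (Fin d))).direction = d - A.card) ∧
  (∀ A : Finset (Fin n), A.card = d + 1 →
    ¬ ∃ x : EuclideanSpace ℝ (Fin d), ∀ i ∈ A, x ∈ 𝓗.hyperplane i)

/-- The complement of the union of the hyperplanes. -/
def complement : Set (EuclideanSpace ℝ (Fin d)) :=
  (⋃ i, (𝓗.hyperplane i : Set (EuclideanSpace ℝ (Fin d))))ᶜ

/-- The chambers: the connected components of the complement of the hyperplanes. -/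
def chambers : Set (Set (EuclideanSpace ℝ (Fin d))) :=
  {C | ∃ x ∈ 𝓗.complement, C = connectedComponentIn 𝓗.complement x}

/-- `F` is a facet of the chamber `C`: it is the part of the closure of `C` on one of the
hyperplanes, and it has full dimension in that hyperplane. -/
def IsFacet (F C : Set (EuclideanSpace ℝ (Fin d))) : Prop :=
  ∃ i, F = closure C ∩ (𝓗.hyperplane i : Set (EuclideanSpace ℝ (Fin d))) ∧
    affineSpan ℝ F = 𝓗.hyperplane i

/-- The chamber graph: distinct chambers are adjacent iff they share a common facet. -/
def chamberGraph : SimpleGraph 𝓗.chambers where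
  Adj C C' := C ≠ C' ∧ ∃ F, 𝓗.IsFacet F C ∧ 𝓗.IsFacet F C'
  symm := ⟨fun _ _ h => ⟨h.1.symm, h.2.imp fun _ hF => hF.symm⟩⟩
  loopless := ⟨fun _ h => h.1 rfl⟩

/-- There are finitely many chambers. -/
theorem finite_chambers : Finite 𝓗.chambers := by
  classical
  let f : 𝓗.chambers → (Fin n → Prop) := fun C i =>
    𝓗.offset i < inner ℝ (𝓗.normal i) C.2.choose
  refine Finite.of_injective f ?_
  intro C C' h
  have hx := C.2.choose_spec
  have hy := C'.2.choose_spec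
  set x := C.2.choose with hxdef
  set y := C'.2.choose with hydef
  apply Subtype.ext
  rw [hx.2, hy.2]
  have hseg : segment ℝ x y ⊆ 𝓗.complement := by
    intro z hz hz'
    obtain ⟨a, b, ha, hb, hab, rfl⟩ := hz
    obtain ⟨i, hi⟩ := Set.mem_iUnion.1 hz'
    have hi' : inner ℝ (𝓗.normal i) (a • x + b • y) = 𝓗.offset i := hi
    rw [inner_add_right, inner_smul_right, inner_smul_right] at hi'
    have hxi : inner ℝ (𝓗.normal i) x ≠ 𝓗.offset i :=
      fun e => hx.1 (Set.mem_iUnion.2 ⟨i, e⟩)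
    have hyi : inner ℝ (𝓗.normal i) y ≠ 𝓗.offset i :=
      fun e => hy.1 (Set.mem_iUnion.2 ⟨i, e⟩)
    have hi2 : (𝓗.offset i < inner ℝ (𝓗.normal i) x) =
      (𝓗.offset i < inner ℝ (𝓗.normal i) y) := congrFun h i
    have hb' : b = 1 - a := by linarith
    subst hb'
    by_cases hlt : 𝓗.offset i < inner ℝ (𝓗.normal i) x
    · have hlt' : 𝓗.offset i < inner ℝ (𝓗.normal i) y := hi2 ▸ hlt
      rcases ha.eq_or_lt with rfl | ha
      · apply hyi; linarith
      · nlinarith [mul_pos ha (sub_pos.2 hlt), mul_nonneg hb (sub_pos.2 hlt').le]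
    · have hlt' : ¬ 𝓗.offset i < inner ℝ (𝓗.normal i) y := hi2 ▸ hlt
      have h1 := lt_of_le_of_ne (not_lt.1 hlt) hxi
      have h2 := lt_of_le_of_ne (not_lt.1 hlt') hyi
      rcases ha.eq_or_lt with rfl | ha
      · apply hyi; linarith
      · nlinarith [mul_pos ha (sub_pos.2 h1), mul_nonneg hb (sub_pos.2 h2).le]
  exact connectedComponentIn_eq
    ((convex_segment x y).isPreconnected.subset_connectedComponentIn
      (left_mem_segment ℝ x y) hseg (right_mem_segment ℝ x y))

instance instFintypeChambers : Fintype 𝓗.chambers :=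
  letI := 𝓗.finite_chambers
  Fintype.ofFinite _

end Arrangement

section RandomWalk

open scoped Classical

variable {V : Type*} [Fintype V] (G : SimpleGraph V)

/-- The transition matrix `P = (I + D⁻¹ A) / 2` of the lazy simple random walk on a finite graph
without isolated vertices. -/
def lazyWalk : Matrix V V ℝ :=
  (1 / 2 : ℝ) • (1 + Matrix.diagonal (fun v => (G.degree v : ℝ)⁻¹) * G.adjMatrix ℝ)

/-- The stationary distribution `π(v) = deg(v) / ∑ w, deg(w)`. -/
def stationary (v : V) : ℝ := (G.degree v : ℝ) / ∑ w, (G.degree w : ℝ)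

/-- The total variation distance of two probability vectors on a finite set. -/
def tvDist (μ ν : V → ℝ) : ℝ := (1 / 2) * ∑ v, |μ v - ν v|

/-- `t` is the `ε`-mixing time of the lazy simple random walk on `G`: the least `t` with
`max_x ‖P^t(x, ·) - π‖_TV ≤ ε`. -/
def IsMixingTime (ε : ℝ) (t : ℕ) : Prop :=
  IsLeast {s : ℕ | ∀ x, tvDist ((lazyWalk G ^ s) x) (stationary G) ≤ ε} t

end RandomWalk

end

/-!
A chamber is determined by its sign vector, and two chambers are adjacent iff their sign vectors
differ in one entry. So the mixing time bound follows from a Poincaré inequality for functions `F`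
on the realizable sign vectors: the sum of `(F σ - F τ) ^ 2` over all pairs of directed edges
starting in `σ` and `τ` is `O(n ^ 5)` times the Dirichlet energy of `F`. There are of order `n ^ 3`
directed edges, so the spectral gap is at least of order `n ^ (-2)`, and the contraction of the
variance along the walk gives the mixing time by duality.

For the Poincaré inequality, every chamber is replaced by a vertex of its closure, and any two
triples of hyperplanes are connected by three exchanges of one hyperplane, each of which moves a
vertex along a line of the arrangement. Such a line has up to `n - 2` vertices, so charging all the
edges around each of them would cost a factor `n ^ 2` too much. Instead, fix a generic linear
functional `h`. A closed cell has at most one vertex where `h` is minimal and one where it is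
maximal, so the edges which leave a cell at one of these two vertices have total energy `O(1)` times
the Dirichlet energy. A line can be followed using such edges only: among the four chambers around a
segment of the line, all the ones that have to be joined are joined by extremal edges at one of the
two ends of the segment.
-/

noncomputable section

open Finset Topology

/-! ### Sign vectors -/

section SignVectors

/-- The real number `±1` with the sign encoded by a Boolean: `true` stands for `+`. -/
def boolSign (b : Bool) : ℝ := if b then 1 else -1

@[simp] theorem boolSign_true : boolSign true = 1 := rfl

@[simp] theorem boolSign_false : boolSign false = -1 := rfl

theorem boolSign_not (b : Bool) : boolSign (!b) = -boolSign b := by cases b <;> simp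

theorem boolSign_xor (a b : Bool) : boolSign (a ^^ b) = -(boolSign a * boolSign b) := by
  cases a <;> cases b <;> simp

theorem boolSign_ne_zero (b : Bool) : boolSign b ≠ 0 := by cases b <;> simp

theorem boolSign_mul_self (b : Bool) : boolSign b * boolSign b = 1 := by cases b <;> simp

theorem boolSign_decide_mul_pos {c : ℝ} (hc : c ≠ 0) : 0 < boolSign (decide (0 < c)) * c := by
  rcases hc.lt_or_gt with h | h
  · simp [h.not_gt, h]
  · simp [h]

theorem boolSign_mul_pos_iff {b : Bool} {c : ℝ} (hc : c ≠ 0) :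
    0 < boolSign b * c ↔ decide (0 < c) = b := by
  rcases hc.lt_or_gt with h | h <;> cases b <;> simp [h, h.not_gt]

variable {ι : Type*} [DecidableEq ι]

/-- The sign vector `σ` with its `k`-th entry reversed: the crossing of the `k`-th hyperplane. -/
def flipAt (σ : ι → Bool) (k : ι) : ι → Bool := Function.update σ k (!σ k)

@[simp] theorem flipAt_self (σ : ι → Bool) (k : ι) : flipAt σ k k = !σ k := by simp [flipAt]

theorem flipAt_of_ne (σ : ι → Bool) {k i : ι} (h : i ≠ k) : flipAt σ k i = σ i := by
  simp [flipAt, h]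

@[simp] theorem flipAt_flipAt (σ : ι → Bool) (k : ι) : flipAt (flipAt σ k) k = σ := by
  simp [flipAt]

theorem flipAt_injective (σ : ι → Bool) : Function.Injective (flipAt σ) := by
  intro k k' h
  by_contra hne
  have hk := congrFun h k
  rw [flipAt_self, flipAt_of_ne _ hne] at hk
  exact Bool.not_ne_self _ hk

theorem eq_or_eq_flipAt {σ τ : ι → Bool} {k : ι} (h : ∀ i, i ≠ k → τ i = σ i) :
    τ = σ ∨ τ = flipAt σ k := by
  have hcases : τ k = σ k ∨ τ k = !σ k := by cases τ k <;> cases σ k <;> simp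
  refine hcases.imp (fun hk => funext fun i => ?_) (fun hk => funext fun i => ?_) <;>
    rcases eq_or_ne i k with rfl | hi
  · exact hk
  · exact h i hi
  · rw [hk, flipAt_self]
  · rw [h i hi, flipAt_of_ne _ hi]

theorem abs_sub_le_card_mul_of_flipAt {G : (ι → Bool) → ℝ} {S : Finset ι} {c : ℝ}
    (hG : ∀ σ, ∀ k ∈ S, |G σ - G (flipAt σ k)| ≤ c) {σ τ : ι → Bool}
    (h : ∀ i ∉ S, τ i = σ i) : |G σ - G τ| ≤ #S * c := by
  induction S using Finset.induction_on generalizing σ with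
  | empty => simp [show τ = σ from funext fun i => h i (notMem_empty i)]
  | insert k S hk ih =>
    set ρ := Function.update σ k (τ k) with hρ
    have hfirst : |G σ - G ρ| ≤ c := by
      have hstep := hG σ k (mem_insert_self k S)
      rcases eq_or_eq_flipAt (σ := σ) (τ := ρ) (k := k) fun i hi => by simp [hρ, hi] with e | e
      · rw [e, sub_self, abs_zero]
        exact (abs_nonneg _).trans hstep
      · rwa [e]
    have hrest : |G ρ - G τ| ≤ #S * c := by
      refine ih (fun σ l hl => hG σ l (mem_insert_of_mem hl)) fun i hi => ?_
      rcases eq_or_ne i k with rfl | hik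
      · simp [hρ]
      · simp [hρ, hik, h i (by simp [hi, hik])]
    rw [card_insert_of_notMem hk]
    push_cast
    linarith [abs_sub_le (G σ) (G ρ) (G τ)]

/-- The squared increment of `F` along the directed edge `x = (σ, k)` from `σ` to `flipAt σ k`. -/
def flipEnergy (F : (ι → Bool) → ℝ) (x : (ι → Bool) × ι) : ℝ := (F x.1 - F (flipAt x.1 x.2)) ^ 2

theorem flipEnergy_nonneg (F : (ι → Bool) → ℝ) (x : (ι → Bool) × ι) : 0 ≤ flipEnergy F x :=
  sq_nonneg _

end SignVectors

/-! ### Cells and chambers -/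

namespace Arrangement

variable {d n : ℕ} (𝓗 : Arrangement d n)

/-- The affine form vanishing exactly on the `i`-th hyperplane. -/
def form (i : Fin n) (x : EuclideanSpace ℝ (Fin d)) : ℝ := inner ℝ (𝓗.normal i) x - 𝓗.offset i

theorem mem_hyperplane_iff {i : Fin n} {x : EuclideanSpace ℝ (Fin d)} :
    x ∈ 𝓗.hyperplane i ↔ 𝓗.form i x = 0 := by
  rw [form, sub_eq_zero]
  rfl

theorem mem_complement_iff {x : EuclideanSpace ℝ (Fin d)} :
    x ∈ 𝓗.complement ↔ ∀ i, 𝓗.form i x ≠ 0 := by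
  simp [complement, mem_hyperplane_iff]

theorem continuous_form (i : Fin n) : Continuous (𝓗.form i) := by
  unfold form
  fun_prop

theorem form_add (i : Fin n) (x v : EuclideanSpace ℝ (Fin d)) :
    𝓗.form i (x + v) = 𝓗.form i x + inner ℝ (𝓗.normal i) v := by
  simp only [form, inner_add_right]
  ring

theorem form_add_smul (i : Fin n) (x v : EuclideanSpace ℝ (Fin d)) (t : ℝ) :
    𝓗.form i (x + t • v) = 𝓗.form i x + t * inner ℝ (𝓗.normal i) v := by
  rw [form_add, inner_smul_right]

theorem inner_normal_sub (i : Fin n) (x y : EuclideanSpace ℝ (Fin d)) :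
    inner ℝ (𝓗.normal i) (x - y) = 𝓗.form i x - 𝓗.form i y := by
  simp [form, inner_sub_right]

theorem form_smul_add_smul (i : Fin n) (x y : EuclideanSpace ℝ (Fin d)) {a b : ℝ}
    (hab : a + b = 1) : 𝓗.form i (a • x + b • y) = a * 𝓗.form i x + b * 𝓗.form i y := by
  simp only [form, inner_add_right, inner_smul_right]
  linear_combination 𝓗.offset i * hab

/-- The open cell of a sign vector: the points on the prescribed side of every hyperplane. -/
def cell (σ : Fin n → Bool) : Set (EuclideanSpace ℝ (Fin d)) :=
  {x | ∀ i, 0 < boolSign (σ i) * 𝓗.form i x}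

/-- The closed cell of a sign vector, cut out by the weak inequalities. -/
def closedCell (σ : Fin n → Bool) : Set (EuclideanSpace ℝ (Fin d)) :=
  {x | ∀ i, 0 ≤ boolSign (σ i) * 𝓗.form i x}

/-- A sign vector is realizable if its cell is nonempty. -/
def Realizable (σ : Fin n → Bool) : Prop := (𝓗.cell σ).Nonempty

/-- The sign vector of a point; a point on a hyperplane is assigned to its negative side. -/
def signs (x : EuclideanSpace ℝ (Fin d)) (i : Fin n) : Bool := decide (0 < 𝓗.form i x)

variable {𝓗} {σ : Fin n → Bool} {x : EuclideanSpace ℝ (Fin d)}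

theorem boolSign_signs_mul_pos {i : Fin n} (h : 𝓗.form i x ≠ 0) :
    0 < boolSign (𝓗.signs x i) * 𝓗.form i x :=
  boolSign_decide_mul_pos h

theorem signs_eq_of_pos {i : Fin n} {b : Bool} (h : 0 < boolSign b * 𝓗.form i x) :
    𝓗.signs x i = b :=
  (boolSign_mul_pos_iff (right_ne_zero_of_mul h.ne')).1 h

theorem mem_cell_signs (hx : x ∈ 𝓗.complement) : x ∈ 𝓗.cell (𝓗.signs x) :=
  fun i => boolSign_signs_mul_pos (𝓗.mem_complement_iff.1 hx i)

theorem signs_eq_of_mem_cell (hx : x ∈ 𝓗.cell σ) : 𝓗.signs x = σ :=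
  funext fun i => signs_eq_of_pos (hx i)

variable (𝓗 σ) in
theorem cell_subset_complement : 𝓗.cell σ ⊆ 𝓗.complement :=
  fun _ hx => 𝓗.mem_complement_iff.2 fun i => right_ne_zero_of_mul (hx i).ne'

variable (𝓗 σ) in
theorem cell_subset_closedCell : 𝓗.cell σ ⊆ 𝓗.closedCell σ := fun _ hx i => (hx i).le

theorem smul_add_smul_mem_cell {y : EuclideanSpace ℝ (Fin d)} (hx : x ∈ 𝓗.closedCell σ)
    (hy : y ∈ 𝓗.cell σ) {a b : ℝ} (ha : 0 ≤ a) (hb : 0 < b) (hab : a + b = 1) :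
    a • x + b • y ∈ 𝓗.cell σ := by
  intro i
  rw [form_smul_add_smul _ _ _ _ hab]
  linarith [mul_nonneg ha (hx i), mul_pos hb (hy i)]

variable (𝓗 σ) in
theorem convex_cell : Convex ℝ (𝓗.cell σ) := by
  intro x hx y hy a b ha hb hab
  rcases hb.eq_or_lt with rfl | hb
  · obtain rfl : a = 1 := by linarith
    simpa using hx
  · exact smul_add_smul_mem_cell (𝓗.cell_subset_closedCell σ hx) hy ha hb hab

theorem closure_cell (h : 𝓗.Realizable σ) : closure (𝓗.cell σ) = 𝓗.closedCell σ := by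
  refine (closure_minimal (𝓗.cell_subset_closedCell σ) ?_).antisymm fun x hx => ?_
  · simp only [closedCell, Set.ofPred_forall]
    exact isClosed_iInter fun i =>
      isClosed_le continuous_const (continuous_const.mul (𝓗.continuous_form i))
  · obtain ⟨y, hy⟩ := h
    have hcont : Continuous fun t : ℝ => (1 - t) • x + t • y := by fun_prop
    have hlim : Filter.Tendsto (fun t : ℝ => (1 - t) • x + t • y) (𝓝[>] 0) (𝓝 x) := by
      simpa using (hcont.tendsto 0).mono_left nhdsWithin_le_nhds
    refine mem_closure_of_tendsto hlim ?_
    filter_upwards [Ioo_mem_nhdsGT (zero_lt_one' ℝ)] with t ht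
    exact smul_add_smul_mem_cell hx hy (sub_nonneg.2 ht.2.le) ht.1 (by ring)

theorem connectedComponentIn_eq_cell (hx : x ∈ 𝓗.cell σ) :
    connectedComponentIn 𝓗.complement x = 𝓗.cell σ := by
  have hxc := 𝓗.cell_subset_complement σ hx
  refine Set.Subset.antisymm (fun y hy i => ?_)
    ((𝓗.convex_cell σ).isPreconnected.subset_connectedComponentIn hx
      (𝓗.cell_subset_complement σ))
  by_contra hneg
  have hcont : Continuous fun z => boolSign (σ i) * 𝓗.form i z :=
    continuous_const.mul (𝓗.continuous_form i)
  obtain ⟨z, hz, hz0⟩ := isPreconnected_connectedComponentIn.intermediate_value hy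
    (mem_connectedComponentIn hxc) hcont.continuousOn ⟨not_lt.1 hneg, (hx i).le⟩
  exact mul_ne_zero (boolSign_ne_zero _)
    (𝓗.mem_complement_iff.1 (connectedComponentIn_subset _ _ hz) i) hz0

variable (𝓗) in
/-- The sign vector of a chamber. -/
def side (C : 𝓗.chambers) : Fin n → Bool := 𝓗.signs C.2.choose

theorem coe_eq_cell_side (C : 𝓗.chambers) : (C : Set _) = 𝓗.cell (𝓗.side C) := by
  have h := C.2.choose_spec
  rw [h.2]
  exact connectedComponentIn_eq_cell (mem_cell_signs h.1)

theorem realizable_side (C : 𝓗.chambers) : 𝓗.Realizable (𝓗.side C) :=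
  ⟨_, mem_cell_signs C.2.choose_spec.1⟩

theorem side_injective : Function.Injective 𝓗.side := by
  intro C C' h
  apply Subtype.ext
  rw [coe_eq_cell_side, coe_eq_cell_side, h]

/-- The chamber with a given realizable sign vector. -/
def chamberOf (h : 𝓗.Realizable σ) : 𝓗.chambers :=
  ⟨𝓗.cell σ, h.some, 𝓗.cell_subset_complement σ h.some_mem,
    (connectedComponentIn_eq_cell h.some_mem).symm⟩

@[simp] theorem side_chamberOf (h : 𝓗.Realizable σ) : 𝓗.side (chamberOf h) = σ := by
  have hmem : h.some ∈ 𝓗.cell (𝓗.side (chamberOf h)) := by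
    rw [← coe_eq_cell_side]
    exact h.some_mem
  exact (signs_eq_of_mem_cell hmem).symm.trans (signs_eq_of_mem_cell h.some_mem)

theorem closure_chamber (C : 𝓗.chambers) :
    closure (C : Set (EuclideanSpace ℝ (Fin d))) = 𝓗.closedCell (𝓗.side C) := by
  rw [coe_eq_cell_side, closure_cell (realizable_side C)]

theorem exists_pos_forall_boolSign_mul_form_pos {p : Fin n → Prop}
    (h : ∀ i, p i → 0 < boolSign (σ i) * 𝓗.form i x) (v : EuclideanSpace ℝ (Fin d)) :
    ∃ t : ℝ, 0 < t ∧ ∀ i, p i → 0 < boolSign (σ i) * 𝓗.form i (x + t • v) := by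
  have hev : ∀ᶠ t in 𝓝[>] (0 : ℝ), ∀ i, p i → 0 < boolSign (σ i) * 𝓗.form i (x + t • v) := by
    refine Filter.eventually_all.2 fun i => Filter.eventually_imp_distrib_left.2 fun hi => ?_
    have hcont : Continuous fun t : ℝ => boolSign (σ i) * 𝓗.form i (x + t • v) :=
      continuous_const.mul ((𝓗.continuous_form i).comp (by fun_prop))
    have hlim := (hcont.tendsto 0).mono_left (nhdsWithin_le_nhds (s := Set.Ioi 0))
    exact hlim.eventually (lt_mem_nhds (by simpa using h i hi))
  obtain ⟨t, ht, ht0⟩ := (hev.and self_mem_nhdsWithin).exists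
  exact ⟨t, ht0, ht⟩

theorem exists_mem_wall {k : Fin n} (h : 𝓗.Realizable σ) (h' : 𝓗.Realizable (flipAt σ k)) :
    ∃ z, 𝓗.form k z = 0 ∧ ∀ i, i ≠ k → 0 < boolSign (σ i) * 𝓗.form i z := by
  obtain ⟨x, hx⟩ := h
  obtain ⟨y, hy⟩ := h'
  set p := boolSign (σ k) * 𝓗.form k x with hp
  set q := -boolSign (σ k) * 𝓗.form k y with hq
  have hp0 : 0 < p := hx k
  have hq0 : 0 < q := by simpa only [flipAt_self, boolSign_not] using hy k
  have hpq : q / (p + q) + p / (p + q) = 1 := by field_simp; ring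
  refine ⟨(q / (p + q)) • x + (p / (p + q)) • y, ?_, fun i hi => ?_⟩ <;>
    rw [form_smul_add_smul _ _ _ _ hpq]
  · refine (mul_eq_zero.1 (?_ : boolSign (σ k) * _ = 0)).resolve_left (boolSign_ne_zero _)
    calc boolSign (σ k) * (q / (p + q) * 𝓗.form k x + p / (p + q) * 𝓗.form k y)
        = (q * (boolSign (σ k) * 𝓗.form k x) - p * (-boolSign (σ k) * 𝓗.form k y)) / (p + q) := by
          ring
      _ = 0 := by rw [← hp, ← hq]; ring
  · have hyi := hy i
    rw [flipAt_of_ne _ hi] at hyi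
    have hx' : 0 < q / (p + q) * (boolSign (σ i) * 𝓗.form i x) := mul_pos (by positivity) (hx i)
    have hy' : 0 < p / (p + q) * (boolSign (σ i) * 𝓗.form i y) := mul_pos (by positivity) hyi
    linarith

theorem mem_closedCell_of_wall {k : Fin n} (hk : 𝓗.form k x = 0)
    (h : ∀ i, i ≠ k → 0 < boolSign (σ i) * 𝓗.form i x) : x ∈ 𝓗.closedCell σ := by
  intro i
  rcases eq_or_ne i k with rfl | hi
  · rw [hk, mul_zero]
  · exact (h i hi).le

variable (𝓗 σ) in
theorem closedCell_flipAt_inter_hyperplane (k : Fin n) :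
    𝓗.closedCell (flipAt σ k) ∩ 𝓗.hyperplane k = 𝓗.closedCell σ ∩ 𝓗.hyperplane k := by
  ext x
  simp only [closedCell, Set.mem_inter_iff, Set.mem_ofPred_eq, SetLike.mem_coe, mem_hyperplane_iff,
    and_congr_left_iff]
  refine fun hx => forall_congr' fun i => ?_
  rcases eq_or_ne i k with rfl | hi
  · simp [hx]
  · rw [flipAt_of_ne _ hi]

theorem affineSpan_closedCell_inter_hyperplane {k : Fin n} (h : 𝓗.Realizable σ)
    (h' : 𝓗.Realizable (flipAt σ k)) :
    affineSpan ℝ (𝓗.closedCell σ ∩ 𝓗.hyperplane k) = 𝓗.hyperplane k := by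
  refine le_antisymm (affineSpan_le.2 Set.inter_subset_right) fun q hq => ?_
  obtain ⟨z, hz, hzσ⟩ := exists_mem_wall h h'
  obtain ⟨t, ht, hwσ⟩ := exists_pos_forall_boolSign_mul_form_pos hzσ (q - z)
  have hw : 𝓗.form k (z + t • (q - z)) = 0 := by
    rw [form_add_smul, inner_normal_sub, hz, 𝓗.mem_hyperplane_iff.1 hq, sub_zero, mul_zero,
      add_zero]
  set F := 𝓗.closedCell σ ∩ (𝓗.hyperplane k : Set (EuclideanSpace ℝ (Fin d)))
  have hzF : z ∈ affineSpan ℝ F :=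
    subset_affineSpan ℝ F ⟨mem_closedCell_of_wall hz hzσ, 𝓗.mem_hyperplane_iff.2 hz⟩
  have hwF : z + t • (q - z) ∈ affineSpan ℝ F :=
    subset_affineSpan ℝ F ⟨mem_closedCell_of_wall hw hwσ, 𝓗.mem_hyperplane_iff.2 hw⟩
  have hqF := AffineSubspace.smul_vsub_vadd_mem (affineSpan ℝ F) t⁻¹ hwF hzF hzF
  simpa [smul_smul, ht.ne'] using hqF

theorem chamberGraph_adj_of_side_eq_flipAt {C C' : 𝓗.chambers} {k : Fin n}
    (h : 𝓗.side C' = flipAt (𝓗.side C) k) : 𝓗.chamberGraph.Adj C C' := by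
  have hne : C ≠ C' := by
    rintro rfl
    simpa using congrFun h k
  have hspan := affineSpan_closedCell_inter_hyperplane (realizable_side C)
    (h ▸ realizable_side C')
  refine ⟨hne, 𝓗.closedCell (𝓗.side C) ∩ 𝓗.hyperplane k, ⟨k, ?_, hspan⟩, ⟨k, ?_, hspan⟩⟩
  · rw [closure_chamber]
  · rw [closure_chamber, h, closedCell_flipAt_inter_hyperplane]

theorem exists_side_eq_flipAt_of_adj
    (hinj : ∀ i j, 𝓗.hyperplane i ≤ 𝓗.hyperplane j → i = j)
    {C C' : 𝓗.chambers} (h : 𝓗.chamberGraph.Adj C C') :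
    ∃ k, 𝓗.side C' = flipAt (𝓗.side C) k := by
  obtain ⟨hne, F, ⟨k, hF, hspan⟩, ⟨k', hF', hspan'⟩⟩ := h
  obtain rfl : k = k' := hinj _ _ (hspan ▸ hspan' ▸ le_rfl)
  rw [closure_chamber] at hF hF'
  have hagree : ∀ i, i ≠ k → 𝓗.side C' i = 𝓗.side C i := by
    intro i hi
    by_contra hopp
    refine hi (hinj k i ?_).symm
    rw [← hspan]
    refine affineSpan_le.2 fun x hx => 𝓗.mem_hyperplane_iff.2 ?_
    have hC : 0 ≤ boolSign (𝓗.side C i) * 𝓗.form i x := (hF ▸ hx).1 i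
    have hC' : 0 ≤ boolSign (𝓗.side C' i) * 𝓗.form i x := (hF' ▸ hx).1 i
    rw [Bool.eq_not_of_ne hopp, boolSign_not] at hC'
    exact (mul_eq_zero.1 (by linarith : boolSign (𝓗.side C i) * 𝓗.form i x = 0)).resolve_left
      (boolSign_ne_zero _)
  exact ⟨k, (eq_or_eq_flipAt hagree).resolve_left fun e => hne (side_injective e.symm)⟩

end Arrangement

/-! ### Vertices -/

namespace Arrangement

variable {d n : ℕ} (𝓗 : Arrangement d n)

/-- The direction space of the intersection of the hyperplanes indexed by `A`: the vectors
orthogonal to all their normals. -/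
def commonKernel (A : Finset (Fin n)) : Submodule ℝ (EuclideanSpace ℝ (Fin d)) :=
  LinearMap.ker (LinearMap.pi fun i : A => innerₛₗ ℝ (𝓗.normal i))

theorem mem_commonKernel {A : Finset (Fin n)} {v : EuclideanSpace ℝ (Fin d)} :
    v ∈ 𝓗.commonKernel A ↔ ∀ i ∈ A, inner ℝ (𝓗.normal i) v = 0 := by
  simp [commonKernel, funext_iff]

/-- The common point of the hyperplanes indexed by `S`, unique when `S` has `d` elements; for
fewer hyperplanes it is an arbitrary point of their intersection. -/
def vertex (S : Finset (Fin n)) : EuclideanSpace ℝ (Fin d) :=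
  Classical.epsilon fun x => ∀ i ∈ S, 𝓗.form i x = 0

variable {𝓗} {σ : Fin n → Bool} {x : EuclideanSpace ℝ (Fin d)} {S : Finset (Fin n)}

/-- The ray from `x` in direction `u` is followed until it first meets a wall of the cell. -/
theorem exists_form_eq_zero_of_mem_closedCell (hx : x ∈ 𝓗.closedCell σ)
    {u : EuclideanSpace ℝ (Fin d)} {k : Fin n}
    (hk : boolSign (σ k) * inner ℝ (𝓗.normal k) u < 0) :
    ∃ l, ∃ t : ℝ, inner ℝ (𝓗.normal l) u ≠ 0 ∧ 𝓗.form l (x + t • u) = 0 ∧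
      x + t • u ∈ 𝓗.closedCell σ := by
  set a : Fin n → ℝ := fun i => -(boolSign (σ i) * inner ℝ (𝓗.normal i) u) with ha
  set b : Fin n → ℝ := fun i => boolSign (σ i) * 𝓗.form i x
  obtain ⟨l, hl, hmin⟩ := exists_min_image ({i | 0 < a i} : Finset (Fin n)) (fun i => b i / a i)
    ⟨k, by simpa [ha] using hk⟩
  have hal : 0 < a l := by simpa using hl
  have hform : ∀ i, boolSign (σ i) * 𝓗.form i (x + (b l / a l) • u) = b i - b l / a l * a i := by
    intro i
    rw [form_add_smul]
    ring
  refine ⟨l, b l / a l, fun h0 => ?_, ?_, fun i => ?_⟩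
  · simp [ha, h0] at hal
  · have hl0 := hform l
    rw [div_mul_cancel₀ _ hal.ne', sub_self] at hl0
    exact (mul_eq_zero.1 hl0).resolve_left (boolSign_ne_zero _)
  · rw [hform, sub_nonneg]
    by_cases hai : 0 < a i
    · exact (le_div_iff₀ hai).1 (hmin i (by simpa using hai))
    · exact (mul_nonpos_of_nonneg_of_nonpos (div_nonneg (hx l) hal.le) (not_lt.1 hai)).trans (hx i)

namespace GeneralPosition

variable (hg : 𝓗.GeneralPosition)
include hg

theorem exists_common_point (hS : #S ≤ d) : ∃ x, ∀ i ∈ S, 𝓗.form i x = 0 := by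
  obtain ⟨x, hx⟩ := (hg.1 S hS).1
  rw [SetLike.mem_coe] at hx
  simp only [AffineSubspace.mem_iInf_iff] at hx
  exact ⟨x, fun i hi => 𝓗.mem_hyperplane_iff.1 (hx i hi)⟩

theorem finrank_commonKernel (hS : #S ≤ d) :
    Module.finrank ℝ (𝓗.commonKernel S) = d - #S := by
  obtain ⟨⟨x, hx⟩, hrank⟩ := hg.1 S hS
  rw [SetLike.mem_coe] at hx
  suffices h : 𝓗.commonKernel S = (⨅ i ∈ S, 𝓗.hyperplane i).direction by rw [h, hrank]
  ext v
  rw [← AffineSubspace.vadd_mem_iff_mem_direction v hx, mem_commonKernel]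
  simp only [AffineSubspace.mem_iInf_iff, mem_hyperplane_iff] at hx ⊢
  refine forall₂_congr fun i hi => ?_
  rw [vadd_eq_add, add_comm, form_add, hx i hi, zero_add]

/-- The normals indexed by `S` are linearly independent. -/
theorem exists_inner_normal_eq (hS : #S ≤ d) (c : Fin n → ℝ) :
    ∃ w, ∀ i ∈ S, inner ℝ (𝓗.normal i) w = c i := by
  set L := LinearMap.pi fun i : S => innerₛₗ ℝ (𝓗.normal i) with hL
  have hker : Module.finrank ℝ (LinearMap.ker L) = d - #S := hg.finrank_commonKernel hS
  have hsurj : LinearMap.range L = ⊤ := by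
    apply Submodule.eq_top_of_finrank_eq
    have hranknullity := LinearMap.finrank_range_add_finrank_ker L
    simp only [finrank_euclideanSpace, Fintype.card_fin, Module.finrank_fintype_fun_eq_card,
      Fintype.card_coe] at hranknullity ⊢
    omega
  obtain ⟨w, hw⟩ := LinearMap.range_eq_top.1 hsurj fun i => c i
  exact ⟨w, fun i hi => by simpa [hL] using congrFun hw ⟨i, hi⟩⟩

theorem eq_of_hyperplane_le (hd : 2 ≤ d) (i j : Fin n) (h : 𝓗.hyperplane i ≤ 𝓗.hyperplane j) :
    i = j := by
  by_contra hij
  have hcard : #{i, j} ≤ d := (card_pair hij).trans_le hd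
  obtain ⟨x, hx⟩ := hg.exists_common_point hcard
  obtain ⟨w, hw⟩ := hg.exists_inner_normal_eq hcard (Pi.single j 1)
  have hi : x + w ∈ 𝓗.hyperplane i := by
    rw [mem_hyperplane_iff, form_add, hx i (by simp), hw i (by simp), Pi.single_eq_of_ne hij,
      add_zero]
  have hj := 𝓗.mem_hyperplane_iff.1 (h hi)
  rw [form_add, hx j (by simp), hw j (by simp), Pi.single_eq_same] at hj
  norm_num at hj

theorem form_ne_zero (hS : #S = d) (h : ∀ i ∈ S, 𝓗.form i x = 0) {l : Fin n} (hl : l ∉ S) :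
    𝓗.form l x ≠ 0 := by
  refine fun hlx => hg.2 (insert l S) (by rw [card_insert_of_notMem hl, hS]) ⟨x, fun i hi => ?_⟩
  rw [mem_hyperplane_iff]
  rcases mem_insert.1 hi with rfl | hi
  exacts [hlx, h i hi]

theorem eq_zero_of_inner_normal_eq_zero (hS : #S = d) {v : EuclideanSpace ℝ (Fin d)}
    (h : ∀ i ∈ S, inner ℝ (𝓗.normal i) v = 0) : v = 0 := by
  have hrank := hg.finrank_commonKernel hS.le
  rw [hS, Nat.sub_self, Submodule.finrank_eq_zero] at hrank
  simpa [hrank] using 𝓗.mem_commonKernel.2 h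

theorem form_vertex (hS : #S ≤ d) : ∀ i ∈ S, 𝓗.form i (𝓗.vertex S) = 0 :=
  Classical.epsilon_spec (hg.exists_common_point hS)

theorem eq_vertex (hS : #S = d) (hx : ∀ i ∈ S, 𝓗.form i x = 0) : x = 𝓗.vertex S := by
  rw [← sub_eq_zero]
  refine hg.eq_zero_of_inner_normal_eq_zero hS fun i hi => ?_
  rw [inner_normal_sub, hx i hi, hg.form_vertex hS.le i hi, sub_self]

theorem form_vertex_ne_zero (hS : #S = d) {l : Fin n} (hl : l ∉ S) :
    𝓗.form l (𝓗.vertex S) ≠ 0 :=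
  hg.form_ne_zero hS (hg.form_vertex hS.le) hl

theorem vertex_mem_closedCell_iff (hS : #S = d) :
    𝓗.vertex S ∈ 𝓗.closedCell σ ↔ ∀ l ∉ S, σ l = 𝓗.signs (𝓗.vertex S) l := by
  refine ⟨fun h l hl => (signs_eq_of_pos ((h l).lt_of_ne' ?_)).symm, fun h l => ?_⟩
  · exact mul_ne_zero (boolSign_ne_zero _) (hg.form_vertex_ne_zero hS hl)
  · by_cases hl : l ∈ S
    · rw [hg.form_vertex hS.le l hl, mul_zero]
    · rw [h l hl]
      exact (boolSign_signs_mul_pos (hg.form_vertex_ne_zero hS hl)).le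

theorem realizable_of_form_eq_zero (hS : #S ≤ d) (h : ∀ i ∈ S, 𝓗.form i x = 0)
    (hσ : ∀ i, i ∉ S → 0 < boolSign (σ i) * 𝓗.form i x) : 𝓗.Realizable σ := by
  obtain ⟨w, hw⟩ := hg.exists_inner_normal_eq hS fun i => boolSign (σ i)
  obtain ⟨t, ht, hpos⟩ := exists_pos_forall_boolSign_mul_form_pos hσ w
  refine ⟨x + t • w, fun i => ?_⟩
  by_cases hi : i ∈ S
  · rwa [form_add_smul, h i hi, hw i hi, zero_add, mul_left_comm, boolSign_mul_self, mul_one]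
  · exact hpos i hi

theorem realizable_of_vertex_mem_closedCell (hS : #S = d) (h : 𝓗.vertex S ∈ 𝓗.closedCell σ) :
    𝓗.Realizable σ :=
  hg.realizable_of_form_eq_zero hS.le (hg.form_vertex hS.le) fun i hi =>
    (h i).lt_of_ne' (mul_ne_zero (boolSign_ne_zero _) (hg.form_vertex_ne_zero hS hi))

theorem exists_insert_of_mem_closedCell (hSd : #S < d) (hSn : #S < n) (h : ∀ i ∈ S, 𝓗.form i x = 0)
    (hx : x ∈ 𝓗.closedCell σ) :
    ∃ l ∉ S, ∃ y ∈ 𝓗.closedCell σ, ∀ i ∈ insert l S, 𝓗.form i y = 0 := by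
  obtain ⟨k, hk⟩ : ∃ k, k ∉ S := by
    by_contra! hall
    rw [eq_univ_iff_forall.2 hall, card_fin] at hSn
    exact hSn.false
  obtain ⟨u, hu⟩ := hg.exists_inner_normal_eq (S := insert k S)
    (by rwa [card_insert_of_notMem hk]) (Pi.single k (-boolSign (σ k)))
  have huS : ∀ i ∈ S, inner ℝ (𝓗.normal i) u = 0 := fun i hi => by
    rw [hu i (mem_insert_of_mem hi), Pi.single_eq_of_ne (ne_of_mem_of_not_mem hi hk)]
  have huk : boolSign (σ k) * inner ℝ (𝓗.normal k) u < 0 := by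
    rw [hu k (mem_insert_self k S), Pi.single_eq_same, mul_neg, boolSign_mul_self]
    norm_num
  obtain ⟨l, t, hlu, hl, hmem⟩ := exists_form_eq_zero_of_mem_closedCell hx huk
  refine ⟨l, fun hlS => hlu (huS l hlS), x + t • u, hmem, fun i hi => ?_⟩
  rcases mem_insert.1 hi with rfl | hi
  · exact hl
  · rw [form_add_smul, h i hi, huS i hi, mul_zero, add_zero]

theorem exists_vertex_mem_closedCell (hn : d ≤ n) {S : Finset (Fin n)} (hS : #S ≤ d)
    {x : EuclideanSpace ℝ (Fin d)} (h : ∀ i ∈ S, 𝓗.form i x = 0) (hx : x ∈ 𝓗.closedCell σ) :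
    ∃ S', S ⊆ S' ∧ #S' = d ∧ 𝓗.vertex S' ∈ 𝓗.closedCell σ := by
  rcases hS.eq_or_lt with hS | hS
  · exact ⟨S, subset_rfl, hS, hg.eq_vertex hS h ▸ hx⟩
  · obtain ⟨l, hl, y, hy, hyS⟩ := hg.exists_insert_of_mem_closedCell hS (hS.trans_le hn) h hx
    have hcard : #(insert l S) = #S + 1 := card_insert_of_notMem hl
    obtain ⟨S', hsub, hS'⟩ := exists_vertex_mem_closedCell hn (hcard.trans_le hS) hyS hy
    exact ⟨S', (subset_insert l S).trans hsub, hS'⟩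
termination_by d - #S

theorem exists_vertex_mem_closedCell_of_wall (hd : 1 ≤ d) (hn : d ≤ n) {k : Fin n}
    (h : 𝓗.Realizable σ) (h' : 𝓗.Realizable (flipAt σ k)) :
    ∃ S : Finset (Fin n), k ∈ S ∧ #S = d ∧ 𝓗.vertex S ∈ 𝓗.closedCell σ := by
  obtain ⟨z, hz, hzσ⟩ := exists_mem_wall h h'
  obtain ⟨S, hkS, hS⟩ := hg.exists_vertex_mem_closedCell hn (S := {k}) (by simpa using hd)
    (by simpa using hz) (mem_closedCell_of_wall hz hzσ)
  exact ⟨S, by simpa using hkS, hS⟩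

end GeneralPosition

end Arrangement

/-! ### Generic functionals -/

namespace Arrangement

variable {d n : ℕ} (𝓗 : Arrangement d n)

/-- A direction vector of the intersection of the hyperplanes indexed by `P`, which is a line when
`P` has `d - 1` elements. -/
def lineDir (P : Finset (Fin n)) : EuclideanSpace ℝ (Fin d) :=
  Classical.epsilon fun v => v ≠ 0 ∧ ∀ i ∈ P, inner ℝ (𝓗.normal i) v = 0

/-- The parameter at which the line `vertex P + t • lineDir P` meets the `l`-th hyperplane. -/
def lineParam (P : Finset (Fin n)) (l : Fin n) : ℝ :=
  -𝓗.form l (𝓗.vertex P) / inner ℝ (𝓗.normal l) (𝓗.lineDir P)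

/-- A linear functional `⟨h, ·⟩` is generic if it is nonconstant on every line of the
arrangement. -/
def IsGeneric (h : EuclideanSpace ℝ (Fin d)) : Prop :=
  ∀ P : Finset (Fin n), #P + 1 = d → inner ℝ h (𝓗.lineDir P) ≠ 0

/-- The coefficient of the `i`-th normal in the expansion of `h` in the normals indexed by `S`. -/
def coeff (h : EuclideanSpace ℝ (Fin d)) (S : Finset (Fin n)) (i : Fin n) : ℝ :=
  inner ℝ h (𝓗.lineDir (S.erase i)) / inner ℝ (𝓗.normal i) (𝓗.lineDir (S.erase i))

/-- The signs of the coefficients of `h` in the normals indexed by `S`. On the octant of these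
signs at the vertex of `S` the functional `h` is minimal at the vertex, on the opposite octant it is
maximal. -/
def up (h : EuclideanSpace ℝ (Fin d)) (S : Finset (Fin n)) (i : Fin n) : Bool :=
  decide (0 < 𝓗.coeff h S i)

variable {𝓗}

theorem signs_eq_signs_of_mul_pos {x y : EuclideanSpace ℝ (Fin d)} {i : Fin n}
    (h : 0 < 𝓗.form i x * 𝓗.form i y) : 𝓗.signs x i = 𝓗.signs y i := by
  unfold signs
  rcases mul_pos_iff.1 h with ⟨hx, hy⟩ | ⟨hx, hy⟩
  · simp [hx, hy]
  · simp [hx.not_gt, hy.not_gt]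

namespace GeneralPosition

variable (hg : 𝓗.GeneralPosition) {P S : Finset (Fin n)} {k k' l : Fin n}
include hg

theorem lineDir_spec (hP : #P + 1 = d) :
    𝓗.lineDir P ≠ 0 ∧ ∀ i ∈ P, inner ℝ (𝓗.normal i) (𝓗.lineDir P) = 0 := by
  have hker : 𝓗.commonKernel P ≠ ⊥ := by
    intro h
    have hrank := hg.finrank_commonKernel (S := P) (by omega)
    rw [h, finrank_bot] at hrank
    omega
  obtain ⟨v, hv, hv0⟩ := Submodule.exists_mem_ne_zero_of_ne_bot hker
  exact Classical.epsilon_spec (p := fun v => v ≠ 0 ∧ ∀ i ∈ P, inner ℝ (𝓗.normal i) v = 0)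
    ⟨v, hv0, 𝓗.mem_commonKernel.1 hv⟩

theorem inner_normal_lineDir_ne_zero (hP : #P + 1 = d) (hl : l ∉ P) :
    inner ℝ (𝓗.normal l) (𝓗.lineDir P) ≠ 0 := by
  obtain ⟨hne, hzero⟩ := hg.lineDir_spec hP
  refine fun h0 => hne (hg.eq_zero_of_inner_normal_eq_zero (S := insert l P)
    (by rw [card_insert_of_notMem hl, hP]) fun i hi => ?_)
  rcases mem_insert.1 hi with rfl | hi
  exacts [h0, hzero i hi]

theorem form_vertex_add_smul_lineDir (hP : #P + 1 = d) (hl : l ∉ P) (t : ℝ) :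
    𝓗.form l (𝓗.vertex P + t • 𝓗.lineDir P) =
      inner ℝ (𝓗.normal l) (𝓗.lineDir P) * (t - 𝓗.lineParam P l) := by
  have hne := hg.inner_normal_lineDir_ne_zero hP hl
  rw [form_add_smul, lineParam]
  field_simp
  ring

theorem vertex_insert (hP : #P + 1 = d) (hk : k ∉ P) :
    𝓗.vertex (insert k P) = 𝓗.vertex P + 𝓗.lineParam P k • 𝓗.lineDir P := by
  refine (hg.eq_vertex (by rw [card_insert_of_notMem hk, hP]) fun i hi => ?_).symm
  rcases mem_insert.1 hi with rfl | hi
  · rw [hg.form_vertex_add_smul_lineDir hP hk, sub_self, mul_zero]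
  · rw [form_add_smul, hg.form_vertex (by omega) i hi, (hg.lineDir_spec hP).2 i hi, mul_zero,
      add_zero]

theorem injOn_lineParam (hP : #P + 1 = d) : Set.InjOn (𝓗.lineParam P) {l | l ∉ P} := by
  intro k hk l hl hkl
  by_contra hne
  refine hg.form_vertex_ne_zero (S := insert k P) (l := l)
    (by rw [card_insert_of_notMem hk, hP]) ?_ ?_
  · exact fun h => (mem_insert.1 h).elim (fun e => hne e.symm) hl
  · rw [hg.vertex_insert hP hk, hg.form_vertex_add_smul_lineDir hP hl, hkl, sub_self, mul_zero]

theorem signs_vertex_insert_eq (hP : #P + 1 = d) (hk : k ∉ P) (hk' : k' ∉ P) (hl : l ∉ P)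
    (h : 0 < (𝓗.lineParam P k - 𝓗.lineParam P l) * (𝓗.lineParam P k' - 𝓗.lineParam P l)) :
    𝓗.signs (𝓗.vertex (insert k P)) l = 𝓗.signs (𝓗.vertex (insert k' P)) l := by
  apply signs_eq_signs_of_mul_pos
  rw [hg.vertex_insert hP hk, hg.vertex_insert hP hk', hg.form_vertex_add_smul_lineDir hP hl,
    hg.form_vertex_add_smul_lineDir hP hl, mul_mul_mul_comm]
  exact mul_pos (mul_self_pos.2 (hg.inner_normal_lineDir_ne_zero hP hl)) h

/-- A real vector space is not a finite union of proper subspaces. -/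
theorem exists_isGeneric : ∃ h, 𝓗.IsGeneric h := by
  have hunion := Subspace.biUnion_ne_univ_of_top_notMem (k := ℝ) (E := EuclideanSpace ℝ (Fin d))
    (s := ({P | #P + 1 = d} : Finset (Finset (Fin n))).image
      fun P => LinearMap.ker (innerₛₗ ℝ (𝓗.lineDir P))) (by
    simp only [mem_image, mem_filter_univ, not_exists, not_and]
    intro P hP htop
    have hself : 𝓗.lineDir P ∈ LinearMap.ker (innerₛₗ ℝ (𝓗.lineDir P)) := htop ▸ Submodule.mem_top
    exact (hg.lineDir_spec hP).1 (by simpa using hself))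
  rw [Set.ne_univ_iff_exists_notMem] at hunion
  obtain ⟨h, hh⟩ := hunion
  refine ⟨h, fun P hP h0 => hh (Set.mem_iUnion₂.2 ⟨_, mem_image.2 ⟨P, by simpa using hP, rfl⟩, ?_⟩)⟩
  simpa [real_inner_comm] using h0

theorem coeff_ne_zero {h : EuclideanSpace ℝ (Fin d)} (hh : 𝓗.IsGeneric h) (hS : #S = d)
    (hk : k ∈ S) : 𝓗.coeff h S k ≠ 0 := by
  have hcard : #(S.erase k) + 1 = d := by rw [card_erase_add_one hk, hS]
  exact div_ne_zero (hh _ hcard) (hg.inner_normal_lineDir_ne_zero hcard (notMem_erase k S))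

theorem inner_sub_vertex (h : EuclideanSpace ℝ (Fin d)) (hS : #S = d)
    (x : EuclideanSpace ℝ (Fin d)) :
    inner ℝ h (x - 𝓗.vertex S) = ∑ i ∈ S, 𝓗.coeff h S i * 𝓗.form i x := by
  have hcard : ∀ i ∈ S, #(S.erase i) + 1 = d := fun i hi => by rw [card_erase_add_one hi, hS]
  have hexpand : x - 𝓗.vertex S = ∑ i ∈ S,
      (𝓗.form i x / inner ℝ (𝓗.normal i) (𝓗.lineDir (S.erase i))) • 𝓗.lineDir (S.erase i) := by
    rw [← sub_eq_zero]
    refine hg.eq_zero_of_inner_normal_eq_zero hS fun j hj => ?_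
    rw [inner_sub_right, inner_normal_sub, hg.form_vertex hS.le j hj, inner_sum,
      sum_eq_single_of_mem j hj]
    · rw [inner_smul_right, div_mul_cancel₀ _
        (hg.inner_normal_lineDir_ne_zero (hcard j hj) (notMem_erase j S)), sub_zero, sub_self]
    · intro i hi hij
      rw [inner_smul_right, (hg.lineDir_spec (hcard i hi)).2 j (mem_erase.2 ⟨hij.symm, hj⟩),
        mul_zero]
  rw [hexpand, inner_sum]
  refine sum_congr rfl fun i _ => ?_
  rw [inner_smul_right, coeff]
  ring

variable {h x : EuclideanSpace ℝ (Fin d)} {σ : Fin n → Bool} {ε : Bool}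

omit hg in
theorem boolSign_mul_coeff_mul_form (hσ : σ k = (𝓗.up h S k ^^ ε)) :
    boolSign (!ε) * (𝓗.coeff h S k * 𝓗.form k x) =
      boolSign (𝓗.up h S k) * 𝓗.coeff h S k * (boolSign (σ k) * 𝓗.form k x) := by
  rw [hσ, boolSign_xor, boolSign_not]
  linear_combination (boolSign ε * 𝓗.coeff h S k * 𝓗.form k x) * boolSign_mul_self (𝓗.up h S k)

theorem boolSign_mul_coeff_mul_form_nonneg (hh : 𝓗.IsGeneric h) (hS : #S = d)
    (hσ : ∀ i ∈ S, σ i = (𝓗.up h S i ^^ ε)) (hx : x ∈ 𝓗.closedCell σ) (hk : k ∈ S) :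
    0 ≤ boolSign (!ε) * (𝓗.coeff h S k * 𝓗.form k x) := by
  rw [boolSign_mul_coeff_mul_form (hσ k hk)]
  exact mul_nonneg (boolSign_decide_mul_pos (hg.coeff_ne_zero hh hS hk)).le (hx k)

theorem boolSign_mul_inner_sub_vertex_nonneg (hh : 𝓗.IsGeneric h) (hS : #S = d)
    (hσ : ∀ i ∈ S, σ i = (𝓗.up h S i ^^ ε)) (hx : x ∈ 𝓗.closedCell σ) :
    0 ≤ boolSign (!ε) * inner ℝ h (x - 𝓗.vertex S) := by
  rw [hg.inner_sub_vertex h hS, mul_sum]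
  exact sum_nonneg fun i hi => hg.boolSign_mul_coeff_mul_form_nonneg hh hS hσ hx hi

theorem form_eq_zero_of_inner_sub_vertex_eq_zero (hh : 𝓗.IsGeneric h) (hS : #S = d)
    (hσ : ∀ i ∈ S, σ i = (𝓗.up h S i ^^ ε)) (hx : x ∈ 𝓗.closedCell σ)
    (h0 : inner ℝ h (x - 𝓗.vertex S) = 0) (hk : k ∈ S) : 𝓗.form k x = 0 := by
  have hsum : ∑ i ∈ S, boolSign (!ε) * (𝓗.coeff h S i * 𝓗.form i x) = 0 := by
    rw [← mul_sum, ← hg.inner_sub_vertex h hS, h0, mul_zero]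
  have hterm := (sum_eq_zero_iff_of_nonneg fun i hi =>
    hg.boolSign_mul_coeff_mul_form_nonneg hh hS hσ hx hi).1 hsum k hk
  simpa [boolSign_ne_zero, hg.coeff_ne_zero hh hS hk] using hterm

/-- For `ε = false` the functional `h` is minimal over the cell at both vertices, for `ε = true` it
is maximal. -/
theorem eq_of_extremal {S' : Finset (Fin n)} (hh : 𝓗.IsGeneric h) (hS : #S = d) (hS' : #S' = d)
    (hv : 𝓗.vertex S ∈ 𝓗.closedCell σ) (hv' : 𝓗.vertex S' ∈ 𝓗.closedCell σ)
    (hσ : ∀ i ∈ S, σ i = (𝓗.up h S i ^^ ε)) (hσ' : ∀ i ∈ S', σ i = (𝓗.up h S' i ^^ ε)) :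
    S = S' := by
  have hle := hg.boolSign_mul_inner_sub_vertex_nonneg hh hS hσ hv'
  have hge := hg.boolSign_mul_inner_sub_vertex_nonneg hh hS' hσ' hv
  rw [← neg_sub, inner_neg_right, mul_neg, neg_nonneg] at hge
  have h0 : inner ℝ h (𝓗.vertex S' - 𝓗.vertex S) = 0 :=
    (mul_eq_zero.1 (hge.antisymm hle)).resolve_left (boolSign_ne_zero _)
  refine eq_of_subset_of_card_le (fun i hi => ?_) (hS'.trans hS.symm).le
  by_contra hi'
  exact hg.form_vertex_ne_zero hS' hi'
    (hg.form_eq_zero_of_inner_sub_vertex_eq_zero hh hS hσ hv' h0 hi)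

end GeneralPosition

end Arrangement

/-! ### Directed edges and octants -/

section DoubleCounting

variable {α β : Type*} {s : Finset α} {t : Finset β} {φ : β → ℝ} {m : ℕ}

theorem sum_sum_le_of_card_le [DecidableEq β] {u : α → Finset β} (hu : ∀ a ∈ s, u a ⊆ t)
    (hm : ∀ b ∈ t, #{a ∈ s | b ∈ u a} ≤ m) (hφ : ∀ b ∈ t, 0 ≤ φ b) :
    ∑ a ∈ s, ∑ b ∈ u a, φ b ≤ m * ∑ b ∈ t, φ b := by
  rw [sum_comm' (t' := t) (s' := fun b => {a ∈ s | b ∈ u a}) (fun a b => by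
    rw [mem_filter]
    exact ⟨fun hab => ⟨hab, hu a hab.1 hab.2⟩, And.left⟩), mul_sum]
  refine sum_le_sum fun b hb => ?_
  rw [sum_const, nsmul_eq_mul]
  exact mul_le_mul_of_nonneg_right (by exact_mod_cast hm b hb) (hφ b hb)

theorem sum_comp_le_of_card_fiber_le [DecidableEq β] {g : α → β} (hg : ∀ a ∈ s, g a ∈ t)
    (hm : ∀ b ∈ t, #{a ∈ s | g a = b} ≤ m) (hφ : ∀ b ∈ t, 0 ≤ φ b) :
    ∑ a ∈ s, φ (g a) ≤ m * ∑ b ∈ t, φ b := by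
  simpa only [sum_singleton] using sum_sum_le_of_card_le (u := fun a => {g a})
    (fun a ha => singleton_subset_iff.2 (hg a ha)) (by simpa only [mem_singleton, eq_comm] using hm)
    hφ

theorem sum_sum_comp_le_of_card_fiber_le [DecidableEq β] {g : α → β} {ψ : β → β → ℝ}
    (hg : ∀ a ∈ s, g a ∈ t) (hm : ∀ b ∈ t, #{a ∈ s | g a = b} ≤ m) (hψ : ∀ b b', 0 ≤ ψ b b') :
    ∑ a ∈ s, ∑ a' ∈ s, ψ (g a) (g a') ≤ m ^ 2 * ∑ b ∈ t, ∑ b' ∈ t, ψ b b' :=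
  calc ∑ a ∈ s, ∑ a' ∈ s, ψ (g a) (g a') ≤ ∑ a ∈ s, m * ∑ b' ∈ t, ψ (g a) b' :=
        sum_le_sum fun a _ => sum_comp_le_of_card_fiber_le hg hm fun b' _ => hψ (g a) b'
    _ ≤ m * ∑ b ∈ t, m * ∑ b' ∈ t, ψ b b' :=
        sum_comp_le_of_card_fiber_le (φ := fun b => m * ∑ b' ∈ t, ψ b b') hg hm fun b _ =>
          mul_nonneg m.cast_nonneg (sum_nonneg fun b' _ => hψ b b')
    _ = m ^ 2 * ∑ b ∈ t, ∑ b' ∈ t, ψ b b' := by rw [← mul_sum, sq, mul_assoc]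

end DoubleCounting

theorem card_filter_mem_powersetCard_le {n : ℕ} (k : Fin n) (d : ℕ) :
    #{S ∈ powersetCard d (univ : Finset (Fin n)) | k ∈ S} ≤ n ^ (d - 1) := by
  refine (card_le_card_of_injOn (t := powersetCard (d - 1) univ) (fun S => S.erase k) ?_ ?_).trans
    (by simpa using Nat.choose_le_pow n (d - 1))
  · intro S hS
    simp only [coe_filter, mem_powersetCard_univ, Set.mem_ofPred_eq] at hS
    simp [card_erase_of_mem hS.2, hS.1]
  · intro S hS S' hS' h
    rw [← insert_erase (mem_filter.1 hS).2, ← insert_erase (mem_filter.1 hS').2]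
    exact congrArg (insert k) h

namespace Arrangement

variable {d n : ℕ} (𝓗 : Arrangement d n)

open Classical in
/-- The directed edges between realizable sign vectors: `(σ, k)` is the edge from `σ` to
`flipAt σ k`. -/
def darts : Finset ((Fin n → Bool) × Fin n) :=
  {x | 𝓗.Realizable x.1 ∧ 𝓗.Realizable (flipAt x.1 x.2)}

/-- The Dirichlet energy of `F` on the realizable sign vectors, summed over directed edges. -/
def energy (F : (Fin n → Bool) → ℝ) : ℝ := ∑ x ∈ 𝓗.darts, flipEnergy F x

open Classical in
/-- The directed edges from the cells around the vertex of `S` across the hyperplanes of `S`. -/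
def vertexDarts (S : Finset (Fin n)) : Finset ((Fin n → Bool) × Fin n) :=
  {x ∈ 𝓗.darts | x.2 ∈ S ∧ 𝓗.vertex S ∈ 𝓗.closedCell x.1}

/-- The energy of the edges between the cells around the vertex of `S`. -/
def localEnergy (F : (Fin n → Bool) → ℝ) (S : Finset (Fin n)) : ℝ :=
  ∑ x ∈ 𝓗.vertexDarts S, flipEnergy F x

open Classical in
/-- The edges starting at the two cells around the vertex of `S` on which `h` is minimal or
maximal at the vertex. -/
def extremalDarts (h : EuclideanSpace ℝ (Fin d)) (S : Finset (Fin n)) :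
    Finset ((Fin n → Bool) × Fin n) :=
  {x ∈ 𝓗.vertexDarts S | ∃ ε, ∀ i ∈ S, x.1 i = (𝓗.up h S i ^^ ε)}

/-- The energy of the edges starting at the two cells at the vertex of `S` on which `h` is extremal
there. A cell has at most two extremal vertices, so the extremal energies of all vertices add up to
at most twice the total energy, without the factor `n ^ (d - 1)` lost by `localEnergy`. -/
def extremalEnergy (h : EuclideanSpace ℝ (Fin d)) (F : (Fin n → Bool) → ℝ)
    (S : Finset (Fin n)) : ℝ :=
  ∑ x ∈ 𝓗.extremalDarts h S, flipEnergy F x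

/-- The sign vector of the cell at the vertex of `S` that has the signs `s` on `S`. -/
def octant (S : Finset (Fin n)) (s : Fin n → Bool) : Fin n → Bool :=
  S.piecewise s (𝓗.signs (𝓗.vertex S))

variable {𝓗} {S : Finset (Fin n)} {s s' σ : Fin n → Bool} {i k : Fin n}
  {F : (Fin n → Bool) → ℝ} {h : EuclideanSpace ℝ (Fin d)}

theorem mem_darts {x : (Fin n → Bool) × Fin n} :
    x ∈ 𝓗.darts ↔ 𝓗.Realizable x.1 ∧ 𝓗.Realizable (flipAt x.1 x.2) := by simp [darts]

theorem mem_vertexDarts {x : (Fin n → Bool) × Fin n} :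
    x ∈ 𝓗.vertexDarts S ↔ x ∈ 𝓗.darts ∧ x.2 ∈ S ∧ 𝓗.vertex S ∈ 𝓗.closedCell x.1 := by
  simp [vertexDarts]

theorem mem_extremalDarts {x : (Fin n → Bool) × Fin n} :
    x ∈ 𝓗.extremalDarts h S ↔
      x ∈ 𝓗.vertexDarts S ∧ ∃ ε, ∀ i ∈ S, x.1 i = (𝓗.up h S i ^^ ε) := by
  simp only [extremalDarts, mem_filter]

theorem energy_nonneg : 0 ≤ 𝓗.energy F := sum_nonneg fun _ _ => flipEnergy_nonneg _ _

theorem localEnergy_nonneg : 0 ≤ 𝓗.localEnergy F S := sum_nonneg fun _ _ => flipEnergy_nonneg _ _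

theorem extremalEnergy_nonneg : 0 ≤ 𝓗.extremalEnergy h F S :=
  sum_nonneg fun _ _ => flipEnergy_nonneg _ _

theorem sum_localEnergy_le :
    ∑ S ∈ powersetCard d univ, 𝓗.localEnergy F S ≤ n ^ (d - 1) * 𝓗.energy F :=
  mod_cast sum_sum_le_of_card_le (fun _ _ _ hx => (mem_vertexDarts.1 hx).1)
    (fun x _ => (card_le_card <| monotone_filter_right _ fun _ _ hx =>
      (mem_vertexDarts.1 hx).2.1).trans (card_filter_mem_powersetCard_le x.2 d))
    fun _ _ => flipEnergy_nonneg F _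

theorem octant_of_mem (hi : i ∈ S) : 𝓗.octant S s i = s i := piecewise_eq_of_mem _ _ _ hi

theorem octant_of_notMem (hi : i ∉ S) : 𝓗.octant S s i = 𝓗.signs (𝓗.vertex S) i :=
  piecewise_eq_of_notMem _ _ _ hi

theorem octant_congr (h : ∀ i ∈ S, s i = s' i) : 𝓗.octant S s = 𝓗.octant S s' :=
  Finset.piecewise_congr _ h fun _ _ => rfl

theorem flipAt_octant (hk : k ∈ S) : flipAt (𝓗.octant S s) k = 𝓗.octant S (flipAt s k) := by
  rw [flipAt, octant_of_mem hk]
  exact Finset.update_piecewise_of_mem _ _ _ hk _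

theorem flipEnergy_flipAt : flipEnergy F (flipAt σ k, k) = flipEnergy F (σ, k) := by
  rw [flipEnergy, flipEnergy, flipAt_flipAt, ← neg_sub, neg_sq]

namespace GeneralPosition

variable (hg : 𝓗.GeneralPosition)
include hg

theorem octant_eq_self (hS : #S = d) (h : 𝓗.vertex S ∈ 𝓗.closedCell σ) : 𝓗.octant S σ = σ := by
  rw [octant, ← Finset.piecewise_congr _ (fun _ _ => rfl) ((hg.vertex_mem_closedCell_iff hS).1 h)]
  exact Finset.piecewise_same S σ

theorem vertex_mem_closedCell_octant (hS : #S = d) : 𝓗.vertex S ∈ 𝓗.closedCell (𝓗.octant S s) :=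
  (hg.vertex_mem_closedCell_iff hS).2 fun _ hl => octant_of_notMem hl

theorem realizable_octant (hS : #S = d) : 𝓗.Realizable (𝓗.octant S s) :=
  hg.realizable_of_vertex_mem_closedCell hS (hg.vertex_mem_closedCell_octant hS)

theorem octant_mem_vertexDarts (hS : #S = d) (hk : k ∈ S) :
    (𝓗.octant S s, k) ∈ 𝓗.vertexDarts S := by
  refine mem_vertexDarts.2 ⟨mem_darts.2 ⟨hg.realizable_octant hS, ?_⟩, hk,
    hg.vertex_mem_closedCell_octant hS⟩
  rw [flipAt_octant hk]
  exact hg.realizable_octant hS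

theorem abs_sub_octant_le (hS : #S = d) (s s' : Fin n → Bool) :
    |F (𝓗.octant S s) - F (𝓗.octant S s')| ≤ d * √(𝓗.localEnergy F S) := by
  rw [octant_congr (s := s') (s' := S.piecewise s' s) fun i hi =>
    (piecewise_eq_of_mem _ _ _ hi).symm]
  have hpath := abs_sub_le_card_mul_of_flipAt (G := fun s => F (𝓗.octant S s)) (S := S)
    (c := √(𝓗.localEnergy F S)) (σ := s) (τ := S.piecewise s' s) (fun s k hk => ?_)
    fun i hi => piecewise_eq_of_notMem _ _ _ hi
  · rwa [hS] at hpath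
  · rw [← flipAt_octant hk]
    exact Real.abs_le_sqrt <| single_le_sum (f := flipEnergy F) (fun _ _ => flipEnergy_nonneg _ _)
      (hg.octant_mem_vertexDarts hS hk)

theorem sq_sub_octant_le (hS : #S = d) (s s' : Fin n → Bool) :
    (F (𝓗.octant S s) - F (𝓗.octant S s')) ^ 2 ≤ d ^ 2 * 𝓗.localEnergy F S := by
  rw [← sq_abs, ← Real.sq_sqrt (localEnergy_nonneg (𝓗 := 𝓗)), ← mul_pow]
  exact pow_le_pow_left₀ (abs_nonneg _) (hg.abs_sub_octant_le hS s s') 2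

theorem flipEnergy_octant_le_extremalEnergy {ε : Bool} (hS : #S = d) (hk : k ∈ S)
    (hs : ∀ i ∈ S, i ≠ k → s i = (𝓗.up h S i ^^ ε)) :
    flipEnergy F (𝓗.octant S s, k) ≤ 𝓗.extremalEnergy h F S := by
  have hmem : ∀ s : Fin n → Bool, (∀ i ∈ S, s i = (𝓗.up h S i ^^ ε)) →
      flipEnergy F (𝓗.octant S s, k) ≤ 𝓗.extremalEnergy h F S := fun s hs =>
    single_le_sum (f := flipEnergy F) (fun _ _ => flipEnergy_nonneg _ _)
      (mem_extremalDarts.2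
        ⟨hg.octant_mem_vertexDarts hS hk, ε, fun i hi => (octant_of_mem hi).trans (hs i hi)⟩)
  rcases eq_or_eq_flipAt (σ := s) (k := k) (τ := Function.update s k (𝓗.up h S k ^^ ε))
    (fun i hi => by simp [hi]) with e | e
  · refine hmem s fun i hi => ?_
    rcases eq_or_ne i k with rfl | hik
    · rw [← e, Function.update_self]
    · exact hs i hi hik
  · rw [← flipEnergy_flipAt, flipAt_octant hk]
    refine hmem _ fun i hi => ?_
    rcases eq_or_ne i k with rfl | hik
    · rw [← e, Function.update_self]
    · rw [flipAt_of_ne _ hik, hs i hi hik]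

theorem abs_sub_octant_le_sqrt_extremalEnergy {ε : Bool} (hS : #S = d) (hk : k ∈ S)
    (hs : ∀ i ∈ S, i ≠ k → s i = (𝓗.up h S i ^^ ε))
    (hs' : ∀ i ∈ S, i ≠ k → s' i = (𝓗.up h S i ^^ ε)) :
    |F (𝓗.octant S s) - F (𝓗.octant S s')| ≤ √(𝓗.extremalEnergy h F S) := by
  have hoff : ∀ i, i ≠ k → 𝓗.octant S s' i = 𝓗.octant S s i := fun i hik => by
    by_cases hi : i ∈ S
    · rw [octant_of_mem hi, octant_of_mem hi, hs i hi hik, hs' i hi hik]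
    · rw [octant_of_notMem hi, octant_of_notMem hi]
  rcases eq_or_eq_flipAt hoff with e | e
  · rw [e, sub_self, abs_zero]
    exact Real.sqrt_nonneg _
  · rw [e]
    exact Real.abs_le_sqrt (hg.flipEnergy_octant_le_extremalEnergy hS hk hs)

theorem sum_extremalEnergy_le (hh : 𝓗.IsGeneric h) :
    ∑ S ∈ powersetCard d univ, 𝓗.extremalEnergy h F S ≤ 2 * 𝓗.energy F := by
  refine mod_cast sum_sum_le_of_card_le (m := 2) (fun S _ x hx => ?_) (fun x _ => ?_)
    fun _ _ => flipEnergy_nonneg F _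
  · exact (mem_vertexDarts.1 (mem_extremalDarts.1 hx).1).1
  choose! ε hε using fun (S : Finset (Fin n))
    (hS : ∃ ε, ∀ i ∈ S, x.1 i = (𝓗.up h S i ^^ ε)) => hS
  refine (card_le_card_of_injOn (t := (univ : Finset Bool)) ε (fun _ _ => mem_univ _) ?_).trans_eq
    Fintype.card_bool
  intro S hS S' hS' e
  simp only [coe_filter, mem_powersetCard_univ, mem_extremalDarts, mem_vertexDarts,
    Set.mem_ofPred_eq] at hS hS'
  exact hg.eq_of_extremal hh hS.1 hS'.1 hS.2.1.2.2 hS'.2.1.2.2 (hε S hS.2.2) (e ▸ hε S' hS'.2.2)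

theorem mul_choose_le_card_darts : d * n.choose d ≤ #𝓗.darts := by
  obtain ⟨h, hh⟩ := hg.exists_isGeneric
  have hcard : #((powersetCard d (univ : Finset (Fin n))).sigma fun S => S) = d * n.choose d := by
    rw [card_sigma, sum_congr rfl fun S hS => (mem_powersetCard.1 hS).2]
    simp [mul_comm]
  rw [← hcard]
  refine card_le_card_of_injOn (fun p => (𝓗.octant p.1 (𝓗.up h p.1), p.2)) ?_ ?_
  · rintro ⟨S, k⟩ hp
    simp only [coe_sigma, Set.mem_sigma_iff, mem_coe, mem_powersetCard_univ] at hp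
    exact (mem_vertexDarts.1 (hg.octant_mem_vertexDarts hp.1 hp.2)).1
  · rintro ⟨S, k⟩ hp ⟨S', k'⟩ hp' e
    simp only [coe_sigma, Set.mem_sigma_iff, mem_coe, mem_powersetCard_univ] at hp hp'
    obtain ⟨e, rfl⟩ := Prod.mk.inj e
    obtain rfl : S = S' := hg.eq_of_extremal hh hp.1 hp'.1 (ε := false)
      (hg.vertex_mem_closedCell_octant hp.1) (e ▸ hg.vertex_mem_closedCell_octant hp'.1)
      (fun i hi => by rw [octant_of_mem hi, Bool.xor_false])
      (fun i hi => by rw [e, octant_of_mem hi, Bool.xor_false])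
    rfl

theorem card_vertexDarts_le (hS : #S = d) : #(𝓗.vertexDarts S) ≤ d * 2 ^ d := by
  refine (card_le_card_of_injOn (t := S ×ˢ S.powerset)
    (fun x => (x.2, S.filter fun i => x.1 i)) ?_ ?_).trans (by simp [hS])
  · intro x hx
    exact mem_product.2 ⟨(mem_vertexDarts.1 hx).2.1, mem_powerset.2 (filter_subset _ _)⟩
  · intro x hx y hy e
    obtain ⟨hk, hS'⟩ := Prod.mk.inj e
    refine Prod.ext ?_ hk
    rw [← hg.octant_eq_self hS (mem_vertexDarts.1 hx).2.2,
      ← hg.octant_eq_self hS (mem_vertexDarts.1 hy).2.2]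
    refine octant_congr fun i hi => Bool.eq_iff_iff.2 ?_
    simpa [hi] using Finset.ext_iff.1 hS' i

theorem exists_mem_vertexDarts (hd : 1 ≤ d) (hn : d ≤ n) {x : (Fin n → Bool) × Fin n}
    (hx : x ∈ 𝓗.darts) : ∃ S : Finset (Fin n), #S = d ∧ x ∈ 𝓗.vertexDarts S := by
  obtain ⟨S, hk, hS, hv⟩ := hg.exists_vertex_mem_closedCell_of_wall hd hn (mem_darts.1 hx).1
    (mem_darts.1 hx).2
  exact ⟨S, hS, mem_vertexDarts.2 ⟨hx, hk, hv⟩⟩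

theorem card_darts_le (hd : 1 ≤ d) (hn : d ≤ n) : #𝓗.darts ≤ d * 2 ^ d * n ^ d := by
  classical
  calc #𝓗.darts ≤ #((powersetCard d univ).biUnion 𝓗.vertexDarts) := by
        refine card_le_card fun x hx => ?_
        obtain ⟨S, hS, hxS⟩ := hg.exists_mem_vertexDarts hd hn hx
        exact mem_biUnion.2 ⟨S, mem_powersetCard_univ.2 hS, hxS⟩
    _ ≤ #(powersetCard d (univ : Finset (Fin n))) * (d * 2 ^ d) :=
        card_biUnion_le_card_mul _ _ _ fun S hS =>
          hg.card_vertexDarts_le (mem_powersetCard_univ.1 hS)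
    _ ≤ d * 2 ^ d * n ^ d := by
        rw [card_powersetCard, card_univ, Fintype.card_fin, mul_comm]
        exact Nat.mul_le_mul_left _ (Nat.choose_le_pow n d)

end GeneralPosition

end Arrangement

/-! ### Routing along a line -/

theorem add_add_sq_le (x y z : ℝ) : (x + y + z) ^ 2 ≤ 3 * (x ^ 2 + y ^ 2 + z ^ 2) := by
  linarith [sq_nonneg (x - y), sq_nonneg (y - z), sq_nonneg (x - z)]

theorem abs_sub_add_le_two_mul_sum_of_consecutive {ι : Type*} {s : Finset ι}
    {t g a : ι → ℝ} (ht : Set.InjOn t s) (ha : ∀ k, 0 ≤ a k)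
    (h : ∀ k ∈ s, ∀ k' ∈ s, k ≠ k' →
      (∀ l ∈ s, l ≠ k → l ≠ k' → 0 < (t k - t l) * (t k' - t l)) → |g k - g k'| ≤ a k + a k') :
    ∀ k ∈ s, ∀ k' ∈ s, k ≠ k' → |g k - g k'| + (a k + a k') ≤ 2 * ∑ l ∈ s, a l := by
  classical
  induction s using Finset.induction_on_max_value t with
  | empty => simp
  | insert m s hm hmax ih =>
    have hlt : ∀ l ∈ s, t l < t m := fun l hl => (hmax l hl).lt_of_ne fun e =>
      hm (ht (mem_insert_of_mem hl) (mem_insert_self m s) e ▸ hl)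
    have hold := ih (ht.mono (by simp)) fun k hk k' hk' hne hkk' =>
      h k (mem_insert_of_mem hk) k' (mem_insert_of_mem hk') hne fun l hl => by
        rcases mem_insert.1 hl with rfl | hl
        · exact fun _ _ => mul_pos_of_neg_of_neg (sub_neg.2 (hlt k hk)) (sub_neg.2 (hlt k' hk'))
        · exact hkk' l hl
    rw [sum_insert hm]
    have hnew : ∀ k ∈ s, |g k - g m| + (a k + a m) ≤ 2 * (a m + ∑ l ∈ s, a l) := fun k hk => by
      obtain ⟨p, hp, hpmax⟩ := exists_max_image s t ⟨k, hk⟩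
      have hpm : |g p - g m| ≤ a p + a m := by
        refine h p (mem_insert_of_mem hp) m (mem_insert_self m s) (fun e => hm (e ▸ hp))
          fun l hl hlp hlm => ?_
        have hls := mem_of_mem_insert_of_ne hl hlm
        refine mul_pos (sub_pos.2 ((hpmax l hls).lt_of_ne fun e => hlp ?_)) (sub_pos.2 (hlt l hls))
        exact ht (mem_insert_of_mem hls) (mem_insert_of_mem hp) e
      rcases eq_or_ne k p with rfl | hkp
      · linarith [single_le_sum (fun l _ => ha l) hk]
      · linarith [hold k hk p hp hkp, abs_sub_le (g k) (g p) (g m)]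
    intro k hk k' hk' hne
    rcases mem_insert.1 hk with rfl | hks <;> rcases mem_insert.1 hk' with rfl | hks'
    · exact absurd rfl hne
    · rw [abs_sub_comm, add_comm (a k)]
      exact hnew k' hks'
    · exact hnew k hks
    · linarith [hold k hks k' hks' hne, ha m]

/-- `G a b` is a value on the four quadrants around a segment. The quadrants `a` and `!a` are joined
at `b` if the signs `u` at one end, or `u'` at the other, are extremal up to the entry `i`;
similarly for the entry `j`. -/
theorem abs_sub_le_three_mul_of_quadrants {G : Bool → Bool → ℝ} {w : ℝ}
    {uᵢ uⱼ uₖ uᵢ' uⱼ' uₖ' c c' : Bool} (hw : 0 ≤ w)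
    (hfst : ∀ a a' b, (b ^^ c) = (uⱼ ^^ uₖ) ∨ (b ^^ c') = (uⱼ' ^^ uₖ') → |G a b - G a' b| ≤ w)
    (hsnd : ∀ a b b', (a ^^ c) = (uᵢ ^^ uₖ) ∨ (a ^^ c') = (uᵢ' ^^ uₖ') → |G a b - G a b'| ≤ w) :
    |G true (!(uᵢ ^^ uⱼ)) - G true (!(uᵢ' ^^ uⱼ'))| ≤ 3 * w := by
  set b := !(uᵢ ^^ uⱼ) with hb
  set b' := !(uᵢ' ^^ uⱼ') with hb'
  have hroute : b = b' ∨
      ((true ^^ c) = (uᵢ ^^ uₖ) ∨ (true ^^ c') = (uᵢ' ^^ uₖ')) ∨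
      ((false ^^ c) = (uᵢ ^^ uₖ) ∨ (false ^^ c') = (uᵢ' ^^ uₖ')) ∧
        ((b ^^ c) = (uⱼ ^^ uₖ) ∨ (b ^^ c') = (uⱼ' ^^ uₖ')) ∧
        ((b' ^^ c) = (uⱼ ^^ uₖ) ∨ (b' ^^ c') = (uⱼ' ^^ uₖ')) := by
    rw [hb, hb']
    clear hb hb' hfst hsnd
    decide +revert
  rcases hroute with h | h | ⟨hcross, hleave, hreturn⟩
  · rw [h, sub_self, abs_zero]
    positivity
  · linarith [hsnd true b b' h]
  · linarith [hfst true false b hleave, hsnd false b b' hcross, hfst false true b' hreturn,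
      abs_sub_le (G true b) (G false b) (G true b'),
      abs_sub_le (G false b) (G false b') (G true b')]

namespace Arrangement

variable {n : ℕ} (𝓗 : Arrangement 3 n)

/-- The sign vector of the cell at the vertex of `{i, j, k}` with the signs `a`, `b`, `c`. -/
def tripleOctant (i j k : Fin n) (a b c : Bool) : Fin n → Bool :=
  𝓗.octant (insert k {i, j}) fun l => if l = i then a else if l = j then b else c

/-- The cell through which the line `{i, j}` is followed at its vertex with the plane `k`: the signs
of `i` and `j` are chosen such that the edge across `k` is counted in the extremal energy. -/
def lineOctant (h : EuclideanSpace ℝ (Fin 3)) (i j k : Fin n) : Fin n → Bool :=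
  𝓗.tripleOctant i j k true (!(𝓗.up h (insert k {i, j}) i ^^ 𝓗.up h (insert k {i, j}) j)) true

variable {𝓗} {i j k k' : Fin n} {S : Finset (Fin n)} {s s' : Fin n → Bool}
  {F : (Fin n → Bool) → ℝ} {h : EuclideanSpace ℝ (Fin 3)} {a a' b b' c c' : Bool}

theorem tripleOctant_eq_of_forall_signs_eq (hij : i ≠ j) (hk : k ∉ ({i, j} : Finset (Fin n)))
    (hk' : k' ∉ ({i, j} : Finset (Fin n))) (hkk' : k ≠ k')
    (hl : ∀ l ∉ ({i, j} : Finset (Fin n)), l ≠ k → l ≠ k' →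
      𝓗.signs (𝓗.vertex (insert k {i, j})) l = 𝓗.signs (𝓗.vertex (insert k' {i, j})) l) (a b) :
    𝓗.tripleOctant i j k a b (𝓗.signs (𝓗.vertex (insert k' {i, j})) k) =
      𝓗.tripleOctant i j k' a b (𝓗.signs (𝓗.vertex (insert k {i, j})) k') := by
  simp only [mem_insert, mem_singleton, not_or] at hk hk' hl
  funext l
  unfold tripleOctant
  rcases eq_or_ne l k with rfl | hlk
  · rw [octant_of_mem (by simp), octant_of_notMem (by simp [hk, hkk'])]
    simp [hk]
  rcases eq_or_ne l k' with rfl | hlk'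
  · rw [octant_of_notMem (by simp [hk', hlk]), octant_of_mem (by simp)]
    simp [hk']
  by_cases hlij : l = i ∨ l = j
  · rw [octant_of_mem (by simp [hlij]), octant_of_mem (by simp [hlij])]
    rcases hlij with rfl | rfl <;> simp [hij.symm]
  · rw [not_or] at hlij
    rw [octant_of_notMem (by simp [hlk, hlij]), octant_of_notMem (by simp [hlk', hlij])]
    exact hl l hlij hlk hlk'

namespace GeneralPosition

variable (hg : 𝓗.GeneralPosition)
include hg

theorem abs_sub_octant_le_of_xor_eq (hS : #S = 3) (hk : k ∈ S)
    (hij : ∀ l ∈ S, l ≠ k → l = i ∨ l = j) (hi : s' i = s i) (hj : s' j = s j)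
    (hs : (s i ^^ s j) = (𝓗.up h S i ^^ 𝓗.up h S j)) :
    |F (𝓗.octant S s) - F (𝓗.octant S s')| ≤ √(𝓗.extremalEnergy h F S) := by
  have hext : ∀ l ∈ S, l ≠ k → s l = (𝓗.up h S l ^^ (𝓗.up h S i ^^ s i)) := fun l hl hlk => by
    rcases hij l hl hlk with rfl | rfl
    · simp
    · generalize 𝓗.up h S l = u, 𝓗.up h S i = v, s l = x, s i = y at hs ⊢
      decide +revert
  refine hg.abs_sub_octant_le_sqrt_extremalEnergy hS hk hext fun l hl hlk => ?_
  rw [← hext l hl hlk]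
  rcases hij l hl hlk with rfl | rfl
  · exact hi
  · exact hj

variable (hij : i ≠ j) (hk : k ∉ ({i, j} : Finset (Fin n)))
include hij hk

theorem abs_sub_tripleOctant_fst_le
    (hbc : (b ^^ c) = (𝓗.up h (insert k {i, j}) j ^^ 𝓗.up h (insert k {i, j}) k)) :
    |F (𝓗.tripleOctant i j k a b c) - F (𝓗.tripleOctant i j k a' b c)| ≤
      √(𝓗.extremalEnergy h F (insert k {i, j})) := by
  have hcard : #(insert k ({i, j} : Finset (Fin n))) = 3 := by
    rw [card_insert_of_notMem hk, card_pair hij]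
  simp only [mem_insert, mem_singleton, not_or] at hk
  exact hg.abs_sub_octant_le_of_xor_eq hcard (i := j) (j := k) (k := i) (by simp)
    (by simp +contextual [or_comm]) (by simp [hij.symm]) (by simp [hk])
    (by simpa [hij.symm, hk] using hbc)

theorem abs_sub_tripleOctant_snd_le
    (hac : (a ^^ c) = (𝓗.up h (insert k {i, j}) i ^^ 𝓗.up h (insert k {i, j}) k)) :
    |F (𝓗.tripleOctant i j k a b c) - F (𝓗.tripleOctant i j k a b' c)| ≤
      √(𝓗.extremalEnergy h F (insert k {i, j})) := by
  have hcard : #(insert k ({i, j} : Finset (Fin n))) = 3 := by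
    rw [card_insert_of_notMem hk, card_pair hij]
  simp only [mem_insert, mem_singleton, not_or] at hk
  exact hg.abs_sub_octant_le_of_xor_eq hcard (i := i) (j := k) (k := j) (by simp)
    (by simp +contextual [or_comm]) (by simp) (by simp [hk]) (by simpa [hk] using hac)

theorem abs_sub_tripleOctant_trd_le
    (hab : (a ^^ b) = (𝓗.up h (insert k {i, j}) i ^^ 𝓗.up h (insert k {i, j}) j)) :
    |F (𝓗.tripleOctant i j k a b c) - F (𝓗.tripleOctant i j k a b c')| ≤
      √(𝓗.extremalEnergy h F (insert k {i, j})) := by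
  have hcard : #(insert k ({i, j} : Finset (Fin n))) = 3 := by
    rw [card_insert_of_notMem hk, card_pair hij]
  exact hg.abs_sub_octant_le_of_xor_eq hcard (i := i) (j := j) (k := k) (by simp)
    (by simp +contextual) (by simp) (by simp [hij.symm]) (by simpa [hij.symm] using hab)

variable (hk' : k' ∉ ({i, j} : Finset (Fin n)))
include hk'

theorem abs_sub_lineOctant_le_of_consecutive (hkk' : k ≠ k')
    (hl : ∀ l ∉ ({i, j} : Finset (Fin n)), l ≠ k → l ≠ k' →
      𝓗.signs (𝓗.vertex (insert k {i, j})) l = 𝓗.signs (𝓗.vertex (insert k' {i, j})) l) :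
    |F (𝓗.lineOctant h i j k) - F (𝓗.lineOctant h i j k')| ≤
      5 * √(𝓗.extremalEnergy h F (insert k {i, j})) +
        5 * √(𝓗.extremalEnergy h F (insert k' {i, j})) := by
  have hsegment := tripleOctant_eq_of_forall_signs_eq hij hk hk' hkk' hl
  set S := insert k ({i, j} : Finset (Fin n))
  set S' := insert k' ({i, j} : Finset (Fin n))
  set w := √(𝓗.extremalEnergy h F S)
  set w' := √(𝓗.extremalEnergy h F S')
  set c := 𝓗.signs (𝓗.vertex S') k
  set c' := 𝓗.signs (𝓗.vertex S) k'
  have hw : 0 ≤ w := Real.sqrt_nonneg _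
  have hw' : 0 ≤ w' := Real.sqrt_nonneg _
  set β := !(𝓗.up h S i ^^ 𝓗.up h S j)
  set β' := !(𝓗.up h S' i ^^ 𝓗.up h S' j) with hβ'
  have hstart : |F (𝓗.lineOctant h i j k) - F (𝓗.tripleOctant i j k true β c)| ≤ w :=
    hg.abs_sub_tripleOctant_trd_le hij hk (by simp)
  have hend : |F (𝓗.tripleOctant i j k true β' c) - F (𝓗.lineOctant h i j k')| ≤ w' := by
    rw [hsegment]
    exact hg.abs_sub_tripleOctant_trd_le hij hk' (by simp [S', hβ'])
  have haround : |F (𝓗.tripleOctant i j k true β c) - F (𝓗.tripleOctant i j k true β' c)| ≤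
      3 * (w + w') := by
    refine abs_sub_le_three_mul_of_quadrants (G := fun a b => F (𝓗.tripleOctant i j k a b c))
      (uₖ := 𝓗.up h S k) (uₖ' := 𝓗.up h S' k') (c := c) (c' := c') (by positivity)
      (fun a a' b hb => ?_) (fun a b b' ha => ?_)
    · rcases hb with hb | hb
      · linarith [hg.abs_sub_tripleOctant_fst_le hij hk hb (F := F) (a := a) (a' := a')]
      · simp only [hsegment]
        linarith [hg.abs_sub_tripleOctant_fst_le hij hk' hb (F := F) (a := a) (a' := a')]
    · rcases ha with ha | ha
      · linarith [hg.abs_sub_tripleOctant_snd_le hij hk ha (F := F) (b := b) (b' := b')]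
      · simp only [hsegment]
        linarith [hg.abs_sub_tripleOctant_snd_le hij hk' ha (F := F) (b := b) (b' := b')]
  linarith [abs_sub_le (F (𝓗.lineOctant h i j k)) (F (𝓗.tripleOctant i j k true β c))
      (F (𝓗.lineOctant h i j k')),
    abs_sub_le (F (𝓗.tripleOctant i j k true β c)) (F (𝓗.tripleOctant i j k true β' c))
      (F (𝓗.lineOctant h i j k'))]

theorem abs_sub_lineOctant_le :
    |F (𝓗.lineOctant h i j k) - F (𝓗.lineOctant h i j k')| ≤
      10 * ∑ l ∈ ({i, j} : Finset (Fin n))ᶜ, √(𝓗.extremalEnergy h F (insert l {i, j})) := by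
  have hP : #({i, j} : Finset (Fin n)) + 1 = 3 := by rw [card_pair hij]
  set w : Fin n → ℝ := fun l => 5 * √(𝓗.extremalEnergy h F (insert l {i, j})) with hw
  have hw0 : ∀ l, 0 ≤ w l := fun l => by positivity
  have hsum : 10 * ∑ l ∈ ({i, j} : Finset (Fin n))ᶜ, √(𝓗.extremalEnergy h F (insert l {i, j})) =
      2 * ∑ l ∈ ({i, j} : Finset (Fin n))ᶜ, w l := by
    rw [hw, ← mul_sum]
    ring
  rw [hsum]
  rcases eq_or_ne k k' with rfl | hkk'
  · rw [sub_self, abs_zero]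
    exact mul_nonneg zero_le_two (sum_nonneg fun l _ => hw0 l)
  have htelescope := abs_sub_add_le_two_mul_sum_of_consecutive (s := ({i, j} : Finset (Fin n))ᶜ)
    (t := 𝓗.lineParam {i, j}) (g := fun k => F (𝓗.lineOctant h i j k))
    ((hg.injOn_lineParam hP).mono fun l hl => mem_compl.1 (mem_coe.1 hl)) hw0
    (fun k hk k' hk' hkk' hcons => hg.abs_sub_lineOctant_le_of_consecutive hij (mem_compl.1 hk)
      (mem_compl.1 hk') hkk' fun l hl hlk hlk' => hg.signs_vertex_insert_eq hP (mem_compl.1 hk)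
        (mem_compl.1 hk') hl (hcons l (mem_compl.2 hl) hlk hlk'))
    k (mem_compl.2 hk) k' (mem_compl.2 hk') hkk'
  linarith [hw0 k, hw0 k']

theorem sq_sub_lineOctant_le :
    (F (𝓗.lineOctant h i j k) - F (𝓗.lineOctant h i j k')) ^ 2 ≤
      100 * n * ∑ l ∈ ({i, j} : Finset (Fin n))ᶜ, 𝓗.extremalEnergy h F (insert l {i, j}) := by
  have hcauchy := sq_sum_le_card_mul_sum_sq (s := ({i, j} : Finset (Fin n))ᶜ)
    (f := fun l => √(𝓗.extremalEnergy h F (insert l {i, j})))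
  simp only [Real.sq_sqrt extremalEnergy_nonneg] at hcauchy
  have hcard : (#({i, j} : Finset (Fin n))ᶜ : ℝ) ≤ n := by
    exact_mod_cast (card_le_univ _).trans_eq (Fintype.card_fin n)
  calc _ ≤ (10 * ∑ l ∈ ({i, j} : Finset (Fin n))ᶜ,
        √(𝓗.extremalEnergy h F (insert l {i, j}))) ^ 2 :=
        sq_le_sq.2 ((hg.abs_sub_lineOctant_le hij hk hk').trans (le_abs_self _))
    _ ≤ 10 ^ 2 * (#({i, j} : Finset (Fin n))ᶜ *
        ∑ l ∈ ({i, j} : Finset (Fin n))ᶜ, 𝓗.extremalEnergy h F (insert l {i, j})) := by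
        rw [mul_pow]
        gcongr
    _ ≤ 10 ^ 2 * (n *
        ∑ l ∈ ({i, j} : Finset (Fin n))ᶜ, 𝓗.extremalEnergy h F (insert l {i, j})) := by
        have := sum_nonneg fun l (_ : l ∈ ({i, j} : Finset (Fin n))ᶜ) =>
          extremalEnergy_nonneg (𝓗 := 𝓗) (S := insert l {i, j}) (F := F) (h := h)
        gcongr
    _ = _ := by ring

theorem sq_sub_octant_true_le :
    (F (𝓗.octant (insert k {i, j}) fun _ => true) -
        F (𝓗.octant (insert k' {i, j}) fun _ => true)) ^ 2 ≤
      27 * 𝓗.localEnergy F (insert k {i, j}) + 27 * 𝓗.localEnergy F (insert k' {i, j}) +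
        300 * n * ∑ l ∈ ({i, j} : Finset (Fin n))ᶜ, 𝓗.extremalEnergy h F (insert l {i, j}) := by
  have hcard : ∀ l ∉ ({i, j} : Finset (Fin n)), #(insert l ({i, j} : Finset (Fin n))) = 3 :=
    fun l hl => by rw [card_insert_of_notMem hl, card_pair hij]
  have hstart : (F (𝓗.octant (insert k {i, j}) fun _ => true) - F (𝓗.lineOctant h i j k)) ^ 2 ≤ _ :=
    hg.sq_sub_octant_le (hcard k hk) _ _
  have hline := hg.sq_sub_lineOctant_le hij hk hk' (F := F) (h := h)
  have hend : (F (𝓗.lineOctant h i j k') - F (𝓗.octant (insert k' {i, j}) fun _ => true)) ^ 2 ≤ _ :=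
    hg.sq_sub_octant_le (hcard k' hk') _ _
  set x := F (𝓗.octant (insert k {i, j}) fun _ => true) - F (𝓗.lineOctant h i j k)
  set y := F (𝓗.lineOctant h i j k) - F (𝓗.lineOctant h i j k')
  set z := F (𝓗.lineOctant h i j k') - F (𝓗.octant (insert k' {i, j}) fun _ => true)
  calc _ = (x + y + z) ^ 2 := by ring
    _ ≤ 3 * (x ^ 2 + y ^ 2 + z ^ 2) := add_add_sq_le x y z
    _ ≤ _ := by
        push_cast at hstart hend
        linarith

end GeneralPosition

end Arrangement

/-! ### Exchanges between triples -/

section Exchange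

variable (α : Type*) [DecidableEq α] [Fintype α]

/-- The moves between triples which share two elements: `((i, j), (k, k'))` exchanges `{i, j, k}`
for `{i, j, k'}`. -/
def exchanges : Finset ((α × α) × (α × α)) :=
  {e | e.1.1 ≠ e.1.2 ∧ e.2.1 ∉ ({e.1.1, e.1.2} : Finset α) ∧ e.2.2 ∉ ({e.1.1, e.1.2} : Finset α)}

variable {α}

theorem mem_exchanges {i j k k' : α} : ((i, j), (k, k')) ∈ exchanges α ↔
    i ≠ j ∧ k ∉ ({i, j} : Finset α) ∧ k' ∉ ({i, j} : Finset α) := by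
  simp only [exchanges, mem_filter_univ]

theorem sum_exchanges (f : (α × α) × (α × α) → ℝ) :
    ∑ e ∈ exchanges α, f e = ∑ p ∈ (univ : Finset α).offDiag,
      ∑ k ∈ ({p.1, p.2} : Finset α)ᶜ, ∑ k' ∈ ({p.1, p.2} : Finset α)ᶜ, f (p, (k, k')) := by
  simp only [← sum_product']
  refine sum_finset_product _ _ _ ?_
  rintro ⟨⟨i, j⟩, k, k'⟩
  simp [mem_exchanges]

/-- The change of `r` along an exchange, squared. -/
def exchangeEnergy (r : Finset α → ℝ) (e : (α × α) × (α × α)) : ℝ :=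
  (r (insert e.2.1 {e.1.1, e.1.2}) - r (insert e.2.2 {e.1.1, e.1.2})) ^ 2

/-- The three exchanges which lead from `{i, j, k}` to `{i', j', k'}` through `{i, j, k'}` and
`{i, j', k'}`, where `q = (((i, j), k), ((j', k'), i'))`. -/
def exchangeLeg (q : ((α × α) × α) × ((α × α) × α)) : Fin 3 → (α × α) × (α × α) :=
  ![((q.1.1.1, q.1.1.2), (q.1.2, q.2.1.2)), ((q.1.1.1, q.2.1.2), (q.1.1.2, q.2.1.1)),
    ((q.2.1.1, q.2.1.2), (q.1.1.1, q.2.2))]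

/-- The two elements of `q` which do not occur in the given leg. -/
def exchangeRest (q : ((α × α) × α) × ((α × α) × α)) : Fin 3 → α × α :=
  ![(q.2.1.1, q.2.2), (q.1.2, q.2.2), (q.1.1.2, q.1.2)]

variable (α) in
/-- The paths of three exchanges, encoded as in `exchangeLeg`. -/
def exchangePaths : Finset (((α × α) × α) × ((α × α) × α)) :=
  {q | ∀ m, exchangeLeg q m ∈ exchanges α}

omit [DecidableEq α] [Fintype α] in
theorem exchangeLeg_exchangeRest_injective (m : Fin 3) :
    Function.Injective fun q : ((α × α) × α) × ((α × α) × α) =>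
      (exchangeLeg q m, exchangeRest q m) := by
  rintro ⟨⟨⟨i, j⟩, k⟩, ⟨⟨j', k'⟩, i'⟩⟩ ⟨⟨⟨_, _⟩, _⟩, ⟨⟨_, _⟩, _⟩⟩ h
  fin_cases m <;>
    simp only [exchangeLeg, exchangeRest, Fin.reduceFinMk, Matrix.cons_val, Prod.mk.injEq] at h <;>
    grind

theorem exists_mem_exchangePaths {S S' : Finset α} (hS : #S = 3) (hS' : #S' = 3) :
    ∃ q ∈ exchangePaths α,
      insert q.1.2 {q.1.1.1, q.1.1.2} = S ∧ insert q.2.2 {q.2.1.1, q.2.1.2} = S' := by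
  obtain ⟨i, j, k, hij, hik, hjk, rfl⟩ := card_eq_three.1 hS
  obtain ⟨k', hk'S, hk'⟩ := exists_mem_notMem_of_card_lt_card
    (s := ({i, j} : Finset α)) (t := S') (by rw [card_pair hij, hS']; norm_num)
  have hcard : #(S'.erase k') = 2 := by rw [card_erase_of_mem hk'S, hS']
  obtain ⟨j', hj'S, hj'⟩ := exists_mem_notMem_of_card_lt_card
    (s := ({i} : Finset α)) (t := S'.erase k') (by rw [card_singleton, hcard]; norm_num)
  obtain ⟨i', hi'⟩ : ∃ i', (S'.erase k').erase j' = {i'} :=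
    card_eq_one.1 (by rw [card_erase_of_mem hj'S, hcard])
  have hi'S : i' ∈ (S'.erase k').erase j' := by rw [hi']; exact mem_singleton_self i'
  refine ⟨(((i, j), k), ((j', k'), i')), ?_, by grind, ?_⟩
  · simp only [exchangePaths, mem_filter_univ, Fin.forall_fin_succ, exchangeLeg]
    simp only [Matrix.cons_val, Fin.succ_zero_eq_one, Fin.succ_one_eq_two, mem_exchanges]
    grind
  · rw [← insert_erase hk'S, ← insert_erase hj'S, hi']
    grind

theorem sum_exchangeEnergy_exchangeLeg_le (r : Finset α → ℝ) (m : Fin 3) :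
    ∑ q ∈ exchangePaths α, exchangeEnergy r (exchangeLeg q m) ≤
      (Fintype.card α : ℝ) ^ 2 * ∑ e ∈ exchanges α, exchangeEnergy r e := by
  have hleg : ∀ q ∈ exchangePaths α, exchangeLeg q m ∈ exchanges α := fun q hq =>
    (mem_filter_univ q).1 hq m
  have hfiber : ∀ e ∈ exchanges α, #{q ∈ exchangePaths α | exchangeLeg q m = e} ≤
      Fintype.card α ^ 2 := fun e _ => by
    refine (card_le_card_of_injOn (fun q => exchangeRest q m) (t := univ) (by simp)
      fun q hq q' hq' h => ?_).trans_eq (by simp [sq])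
    exact exchangeLeg_exchangeRest_injective m
      (Prod.ext ((mem_filter.1 hq).2.trans (mem_filter.1 hq').2.symm) h)
  exact_mod_cast sum_comp_le_of_card_fiber_le hleg hfiber (φ := exchangeEnergy r)
    fun e _ => sq_nonneg _

omit [Fintype α] in
theorem sq_sub_le_sum_exchangeEnergy (r : Finset α → ℝ) (q : ((α × α) × α) × ((α × α) × α)) :
    (r (insert q.1.2 {q.1.1.1, q.1.1.2}) - r (insert q.2.2 {q.2.1.1, q.2.1.2})) ^ 2 ≤
      3 * ∑ m, exchangeEnergy r (exchangeLeg q m) := by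
  obtain ⟨⟨⟨i, j⟩, k⟩, ⟨⟨j', k'⟩, i'⟩⟩ := q
  have hmid : insert k' ({i, j} : Finset α) = insert j {i, k'} := by grind
  have hmid' : insert j' ({i, k'} : Finset α) = insert i {j', k'} := by grind
  simp only [Fin.sum_univ_three, exchangeEnergy, exchangeLeg, Matrix.cons_val, hmid, hmid']
  refine le_of_eq_of_le ?_ (add_add_sq_le _ _ _)
  ring

theorem sum_sq_sub_le_sum_exchangeEnergy (r : Finset α → ℝ) :
    ∑ S ∈ powersetCard 3 univ, ∑ S' ∈ powersetCard 3 univ, (r S - r S') ^ 2 ≤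
      9 * (Fintype.card α : ℝ) ^ 2 * ∑ e ∈ exchanges α, exchangeEnergy r e := by
  let ends (q : ((α × α) × α) × ((α × α) × α)) : Finset α × Finset α :=
    (insert q.1.2 {q.1.1.1, q.1.1.2}, insert q.2.2 {q.2.1.1, q.2.1.2})
  have hends : powersetCard 3 univ ×ˢ powersetCard 3 univ ⊆ (exchangePaths α).image ends :=
    fun p hp => by
      simp only [mem_product, mem_powersetCard_univ] at hp
      obtain ⟨q, hq, hS, hS'⟩ := exists_mem_exchangePaths hp.1 hp.2
      exact mem_image.2 ⟨q, hq, Prod.ext hS hS'⟩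
  calc _ = ∑ p ∈ powersetCard 3 univ ×ˢ powersetCard 3 univ, (r p.1 - r p.2) ^ 2 :=
        (sum_product _ _ _).symm
    _ ≤ ∑ p ∈ (exchangePaths α).image ends, (r p.1 - r p.2) ^ 2 :=
        sum_le_sum_of_subset_of_nonneg hends fun _ _ _ => sq_nonneg _
    _ ≤ ∑ q ∈ exchangePaths α, (r (ends q).1 - r (ends q).2) ^ 2 :=
        sum_image_le_of_nonneg fun _ _ => sq_nonneg _
    _ ≤ ∑ q ∈ exchangePaths α, 3 * ∑ m, exchangeEnergy r (exchangeLeg q m) :=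
        sum_le_sum fun q _ => sq_sub_le_sum_exchangeEnergy r q
    _ = 3 * ∑ m, ∑ q ∈ exchangePaths α, exchangeEnergy r (exchangeLeg q m) := by
        rw [← mul_sum, sum_comm]
    _ ≤ 3 * ∑ _m : Fin 3, Fintype.card α ^ 2 * ∑ e ∈ exchanges α, exchangeEnergy r e :=
        mul_le_mul_of_nonneg_left
          (sum_le_sum fun m _ => sum_exchangeEnergy_exchangeLeg_le r m) zero_le_three
    _ = _ := by
        rw [Fin.sum_const, nsmul_eq_mul]
        push_cast
        ring

theorem sum_offDiag_sum_compl_le {φ : Finset α → ℝ} (hφ : ∀ S, 0 ≤ φ S) :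
    ∑ p ∈ (univ : Finset α).offDiag, ∑ k ∈ ({p.1, p.2} : Finset α)ᶜ, φ (insert k {p.1, p.2}) ≤
      27 * ∑ S ∈ powersetCard 3 univ, φ S := by
  rw [sum_sigma']
  refine sum_comp_le_of_card_fiber_le (g := fun x : Σ _ : α × α, α => insert x.2 {x.1.1, x.1.2})
    (m := 27) (fun x hx => ?_) (fun S hS => ?_) fun S _ => hφ S
  · simp only [mem_sigma, mem_offDiag, mem_compl] at hx
    rw [mem_powersetCard_univ, card_insert_of_notMem hx.2, card_pair hx.1.2.2]
  · rw [mem_powersetCard_univ] at hS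
    calc _ ≤ #((S ×ˢ S).sigma fun _ => S) := card_le_card fun x hx => by
          obtain ⟨-, rfl⟩ := mem_filter.1 hx
          simp
      _ = 27 := by simp [card_sigma, card_product, hS]

theorem sum_exchangeEnergy_le {r u w : Finset α → ℝ} {a b : ℝ} (ha : 0 ≤ a) (hb : 0 ≤ b)
    (hu : ∀ S, 0 ≤ u S) (hw : ∀ S, 0 ≤ w S)
    (hr : ∀ i j k k' : α, ((i, j), (k, k')) ∈ exchanges α →
      (r (insert k {i, j}) - r (insert k' {i, j})) ^ 2 ≤
        a * (u (insert k {i, j}) + u (insert k' {i, j})) +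
          b * ∑ l ∈ ({i, j} : Finset α)ᶜ, w (insert l {i, j})) :
    ∑ e ∈ exchanges α, exchangeEnergy r e ≤
      2 * Fintype.card α * a * (27 * ∑ S ∈ powersetCard 3 univ, u S) +
        Fintype.card α ^ 2 * b * (27 * ∑ S ∈ powersetCard 3 univ, w S) := by
  have hline : ∀ p ∈ (univ : Finset α).offDiag, ∑ k ∈ ({p.1, p.2} : Finset α)ᶜ,
      ∑ k' ∈ ({p.1, p.2} : Finset α)ᶜ, exchangeEnergy r (p, (k, k')) ≤
        2 * Fintype.card α * a * ∑ k ∈ ({p.1, p.2} : Finset α)ᶜ, u (insert k {p.1, p.2}) +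
          Fintype.card α ^ 2 * b * ∑ k ∈ ({p.1, p.2} : Finset α)ᶜ, w (insert k {p.1, p.2}) := by
    rintro ⟨i, j⟩ hp
    have hcard : (#({i, j} : Finset α)ᶜ : ℝ) ≤ Fintype.card α := by exact_mod_cast card_le_univ _
    have hu' := sum_nonneg fun k (_ : k ∈ ({i, j} : Finset α)ᶜ) => hu (insert k {i, j})
    have hw' := sum_nonneg fun k (_ : k ∈ ({i, j} : Finset α)ᶜ) => hw (insert k {i, j})
    set m : ℝ := (#({i, j} : Finset α)ᶜ : ℝ)
    set U := ∑ k ∈ ({i, j} : Finset α)ᶜ, u (insert k {i, j}) with hU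
    set W := ∑ k ∈ ({i, j} : Finset α)ᶜ, w (insert k {i, j})
    calc _ ≤ ∑ k ∈ ({i, j} : Finset α)ᶜ, ∑ k' ∈ ({i, j} : Finset α)ᶜ,
          (a * (u (insert k {i, j}) + u (insert k' {i, j})) + b * W) :=
          sum_le_sum fun k hk => sum_le_sum fun k' hk' => hr i j k k' <|
            mem_exchanges.2 ⟨(mem_offDiag.1 hp).2.2, mem_compl.1 hk, mem_compl.1 hk'⟩
      _ = 2 * m * a * U + m ^ 2 * b * W := by
          simp only [sum_add_distrib, ← mul_sum, sum_const, nsmul_eq_mul, ← hU]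
          ring
      _ ≤ _ := by gcongr
  rw [sum_exchanges]
  refine (sum_le_sum hline).trans ?_
  rw [sum_add_distrib, ← mul_sum, ← mul_sum]
  exact add_le_add (mul_le_mul_of_nonneg_left (sum_offDiag_sum_compl_le hu) (by positivity))
    (mul_le_mul_of_nonneg_left (sum_offDiag_sum_compl_le hw) (by positivity))

end Exchange

/-! ### The Poincaré inequality -/

namespace Arrangement

namespace GeneralPosition

section

variable {d n : ℕ} {𝓗 : Arrangement d n} {F : (Fin n → Bool) → ℝ} (hg : 𝓗.GeneralPosition)
include hg

theorem realizable_of_le (hn : n ≤ d) (σ : Fin n → Bool) : 𝓗.Realizable σ :=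
  have hcard : #(univ : Finset (Fin n)) ≤ d := by rwa [card_univ, Fintype.card_fin]
  hg.realizable_of_form_eq_zero hcard (hg.form_vertex hcard) (by simp)

theorem darts_eq_univ (hn : n ≤ d) : 𝓗.darts = univ :=
  eq_univ_of_forall fun _ =>
    mem_darts.2 ⟨hg.realizable_of_le hn _, hg.realizable_of_le hn _⟩

theorem card_darts_of_le (hn : n ≤ d) : #𝓗.darts = 2 ^ n * n := by
  simp [hg.darts_eq_univ hn]

theorem exists_realizable_flipAt (hd : 1 ≤ d) (hn : 1 ≤ n) {σ : Fin n → Bool}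
    (hσ : 𝓗.Realizable σ) : ∃ k, 𝓗.Realizable (flipAt σ k) := by
  rcases le_total d n with hdn | hnd
  · obtain ⟨x, hx⟩ := hσ
    obtain ⟨S, -, hS, hv⟩ := hg.exists_vertex_mem_closedCell hdn (S := ∅) (by simp) (by simp)
      (𝓗.cell_subset_closedCell σ hx)
    obtain ⟨k, hk⟩ : S.Nonempty := card_pos.1 (hS ▸ hd)
    have hdart := hg.octant_mem_vertexDarts (s := σ) hS hk
    rw [hg.octant_eq_self hS hv, mem_vertexDarts, mem_darts] at hdart
    exact ⟨k, hdart.1.2⟩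
  · exact ⟨⟨0, hn⟩, hg.realizable_of_le hnd _⟩

theorem sq_sub_le_energy_of_le (hn : n ≤ d) (σ τ : Fin n → Bool) :
    (F σ - F τ) ^ 2 ≤ n ^ 2 * 𝓗.energy F := by
  have hflip : ∀ s, ∀ k ∈ (univ : Finset (Fin n)), |F s - F (flipAt s k)| ≤ √(𝓗.energy F) :=
    fun s k _ => Real.abs_le_sqrt <| single_le_sum (f := flipEnergy F)
      (fun x _ => flipEnergy_nonneg F x) (a := (s, k)) (by simp [hg.darts_eq_univ hn])
  have hpath := abs_sub_le_card_mul_of_flipAt hflip (σ := σ) (τ := τ) (by simp)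
  rw [card_univ, Fintype.card_fin] at hpath
  calc (F σ - F τ) ^ 2 ≤ (n * √(𝓗.energy F)) ^ 2 := sq_le_sq.2 (hpath.trans (le_abs_self _))
    _ = n ^ 2 * 𝓗.energy F := by rw [mul_pow, Real.sq_sqrt energy_nonneg]

theorem sum_sq_sub_darts_le_of_le (hn : n ≤ d) :
    ∑ x ∈ 𝓗.darts, ∑ y ∈ 𝓗.darts, (F x.1 - F y.1) ^ 2 ≤
      (2 ^ n * n) ^ 2 * n ^ 2 * 𝓗.energy F :=
  calc _ ≤ ∑ _x ∈ 𝓗.darts, ∑ _y ∈ 𝓗.darts, n ^ 2 * 𝓗.energy F :=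
        sum_le_sum fun x _ => sum_le_sum fun y _ => hg.sq_sub_le_energy_of_le hn x.1 y.1
    _ = _ := by
        rw [sum_const, sum_const, hg.card_darts_of_le hn]
        simp only [nsmul_eq_mul]
        push_cast
        ring

end

variable {n : ℕ} {𝓗 : Arrangement 3 n} {F : (Fin n → Bool) → ℝ} (hg : 𝓗.GeneralPosition)
include hg

theorem card_darts_le_pow_three : #𝓗.darts ≤ 24 * n ^ 3 := by
  rcases le_or_gt 3 n with hn | hn
  · exact hg.card_darts_le (by norm_num) hn
  · rw [hg.card_darts_of_le hn.le]
    interval_cases n <;> norm_num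

theorem pow_three_le_nine_mul_card_darts : n ^ 3 ≤ 9 * #𝓗.darts := by
  rcases le_or_gt 3 n with hn | hn
  · have hdarts := hg.mul_choose_le_card_darts
    obtain ⟨m, rfl⟩ := Nat.exists_eq_add_of_le' hn
    have hchoose : (m + 3) * (m + 2) * (m + 1) = 6 * (m + 3).choose 3 := by
      have := Nat.descFactorial_eq_factorial_mul_choose (m + 3) 3
      simp only [Nat.descFactorial, Nat.factorial] at this
      lia
    refine Nat.le_of_mul_le_mul_left (c := 6) ?_ (by norm_num)
    calc 6 * (m + 3) ^ 3 ≤ 6 * (m + 3) ^ 3 + (m + 3) * (21 * m ^ 2 + 45 * m) :=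
          Nat.le_add_right _ _
      _ = 27 * ((m + 3) * (m + 2) * (m + 1)) := by ring
      _ ≤ 6 * (9 * #𝓗.darts) := by lia
  · rw [hg.card_darts_of_le hn.le]
    interval_cases n <;> norm_num

theorem sum_sq_sub_octant_true_le :
    ∑ S ∈ powersetCard 3 univ, ∑ S' ∈ powersetCard 3 univ,
      (F (𝓗.octant S fun _ => true) - F (𝓗.octant S' fun _ => true)) ^ 2 ≤
        158922 * n ^ 5 * 𝓗.energy F := by
  obtain ⟨h, hh⟩ := hg.exists_isGeneric
  have hexchange := sum_exchangeEnergy_le (r := fun S => F (𝓗.octant S fun _ => true))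
    (u := 𝓗.localEnergy F) (w := 𝓗.extremalEnergy h F) (a := 27) (b := 300 * n) (by norm_num)
    (by positivity) (fun _ => localEnergy_nonneg) (fun _ => extremalEnergy_nonneg)
    fun i j k k' he => by
      obtain ⟨hij, hk, hk'⟩ := mem_exchanges.1 he
      rw [mul_add]
      exact hg.sq_sub_octant_true_le hij hk hk'
  rw [Fintype.card_fin] at hexchange
  have hlocal : ∑ S ∈ powersetCard 3 univ, 𝓗.localEnergy F S ≤ n ^ 2 * 𝓗.energy F :=
    sum_localEnergy_le
  have hextremal := hg.sum_extremalEnergy_le hh (F := F)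
  have hrouting :=
    sum_sq_sub_le_sum_exchangeEnergy fun S : Finset (Fin n) => F (𝓗.octant S fun _ => true)
  rw [Fintype.card_fin] at hrouting
  calc _ ≤ _ := hrouting
    _ ≤ 9 * (n : ℝ) ^ 2 * (2 * n * 27 * (27 * (n ^ 2 * 𝓗.energy F)) +
          n ^ 2 * (300 * n) * (27 * (2 * 𝓗.energy F))) := by
        refine mul_le_mul_of_nonneg_left (hexchange.trans ?_) (by positivity)
        gcongr
    _ = _ := by ring

theorem sq_sub_le_of_mem_vertexDarts {S S' : Finset (Fin n)} {x y : (Fin n → Bool) × Fin n}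
    (hS : #S = 3) (hS' : #S' = 3) (hx : x ∈ 𝓗.vertexDarts S) (hy : y ∈ 𝓗.vertexDarts S') :
    (F x.1 - F y.1) ^ 2 ≤ 27 * 𝓗.localEnergy F S + 27 * 𝓗.localEnergy F S' +
      3 * (F (𝓗.octant S fun _ => true) - F (𝓗.octant S' fun _ => true)) ^ 2 := by
  have hstart := hg.sq_sub_octant_le (F := F) hS x.1 fun _ => true
  have hend := hg.sq_sub_octant_le (F := F) hS' (fun _ => true) y.1
  rw [hg.octant_eq_self hS (mem_vertexDarts.1 hx).2.2] at hstart
  rw [hg.octant_eq_self hS' (mem_vertexDarts.1 hy).2.2] at hend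
  have hsplit := add_add_sq_le (F x.1 - F (𝓗.octant S fun _ => true))
    (F (𝓗.octant S fun _ => true) - F (𝓗.octant S' fun _ => true))
    (F (𝓗.octant S' fun _ => true) - F y.1)
  rw [sub_add_sub_cancel, sub_add_sub_cancel] at hsplit
  push_cast at hstart hend
  linarith

theorem exists_forall_mem_vertexDarts (hn : 3 ≤ n) :
    ∃ v : (Fin n → Bool) × Fin n → Finset (Fin n),
      (∀ x ∈ 𝓗.darts, #(v x) = 3 ∧ x ∈ 𝓗.vertexDarts (v x)) ∧
        ∀ S ∈ powersetCard 3 univ, #{x ∈ 𝓗.darts | v x = S} ≤ 24 := by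
  choose! v hv using fun x (hx : x ∈ 𝓗.darts) => hg.exists_mem_vertexDarts (by norm_num) hn hx
  refine ⟨v, hv, fun S hS => ?_⟩
  have hsub : {x ∈ 𝓗.darts | v x = S} ⊆ 𝓗.vertexDarts S := fun x hx => by
    obtain ⟨hdart, hvx⟩ := mem_filter.1 hx
    exact hvx ▸ (hv x hdart).2
  exact (card_le_card hsub).trans (hg.card_vertexDarts_le (mem_powersetCard_univ.1 hS))

theorem sum_sq_sub_darts_le_of_three_le (hn : 3 ≤ n) :
    ∑ x ∈ 𝓗.darts, ∑ y ∈ 𝓗.darts, (F x.1 - F y.1) ^ 2 ≤ 10 ^ 9 * n ^ 5 * 𝓗.energy F := by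
  obtain ⟨v, hv, hfiber⟩ := hg.exists_forall_mem_vertexDarts hn
  have hv_mem : ∀ x ∈ 𝓗.darts, v x ∈ powersetCard 3 univ := fun x hx =>
    mem_powersetCard_univ.2 (hv x hx).1
  set r : Finset (Fin n) → ℝ := fun S => F (𝓗.octant S fun _ => true)
  have hlocal : ∑ x ∈ 𝓗.darts, 𝓗.localEnergy F (v x) ≤ 24 * (n ^ 2 * 𝓗.energy F) :=
    (sum_comp_le_of_card_fiber_le (φ := 𝓗.localEnergy F) hv_mem hfiber
      fun _ _ => localEnergy_nonneg).trans <| by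
      push_cast
      exact mul_le_mul_of_nonneg_left sum_localEnergy_le (by norm_num)
  have hbase : ∑ x ∈ 𝓗.darts, ∑ y ∈ 𝓗.darts, (r (v x) - r (v y)) ^ 2 ≤
      24 ^ 2 * (158922 * n ^ 5 * 𝓗.energy F) :=
    (sum_sum_comp_le_of_card_fiber_le (ψ := fun S S' => (r S - r S') ^ 2) hv_mem hfiber
      fun _ _ => sq_nonneg _).trans <| by
        push_cast
        exact mul_le_mul_of_nonneg_left hg.sum_sq_sub_octant_true_le (by norm_num)
  have hcard : (#𝓗.darts : ℝ) ≤ 24 * n ^ 3 := mod_cast hg.card_darts_le_pow_three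
  have hlocal_nonneg : 0 ≤ ∑ x ∈ 𝓗.darts, 𝓗.localEnergy F (v x) :=
    sum_nonneg fun _ _ => localEnergy_nonneg
  have hE : 0 ≤ (n : ℝ) ^ 5 * 𝓗.energy F := mul_nonneg (by positivity) energy_nonneg
  calc ∑ x ∈ 𝓗.darts, ∑ y ∈ 𝓗.darts, (F x.1 - F y.1) ^ 2
      ≤ ∑ x ∈ 𝓗.darts, ∑ y ∈ 𝓗.darts, (27 * 𝓗.localEnergy F (v x) +
          27 * 𝓗.localEnergy F (v y) + 3 * (r (v x) - r (v y)) ^ 2) :=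
        sum_le_sum fun x hx => sum_le_sum fun y hy => hg.sq_sub_le_of_mem_vertexDarts
          (hv x hx).1 (hv y hy).1 (hv x hx).2 (hv y hy).2
    _ = 54 * (#𝓗.darts * ∑ x ∈ 𝓗.darts, 𝓗.localEnergy F (v x)) +
          3 * ∑ x ∈ 𝓗.darts, ∑ y ∈ 𝓗.darts, (r (v x) - r (v y)) ^ 2 := by
        simp only [sum_add_distrib, sum_const, ← mul_sum, nsmul_eq_mul]
        ring
    _ ≤ 54 * (24 * n ^ 3 * (24 * (n ^ 2 * 𝓗.energy F))) +
          3 * (24 ^ 2 * (158922 * n ^ 5 * 𝓗.energy F)) := by gcongr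
    _ ≤ 10 ^ 9 * n ^ 5 * 𝓗.energy F := by linarith

theorem sum_sq_sub_darts_le :
    ∑ x ∈ 𝓗.darts, ∑ y ∈ 𝓗.darts, (F x.1 - F y.1) ^ 2 ≤ 10 ^ 9 * n ^ 5 * 𝓗.energy F := by
  rcases le_or_gt 3 n with hn | hn
  · exact hg.sum_sq_sub_darts_le_of_three_le hn
  · refine (hg.sum_sq_sub_darts_le_of_le hn.le).trans ?_
    refine mul_le_mul_of_nonneg_right ?_ energy_nonneg
    interval_cases n <;> norm_num

end GeneralPosition

end Arrangement

/-! ### The lazy random walk -/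

section LazyWalk

open scoped Classical Matrix

variable {V : Type*} [Fintype V] (G : SimpleGraph V)

/-- The sum of the degrees of `G`, the normalising constant of the stationary distribution. -/
def degreeSum : ℝ := ∑ v, (G.degree v : ℝ)

/-- The Dirichlet form of `f` on `G`, with each edge counted in both directions. -/
def dirichletEnergy (f : V → ℝ) : ℝ := ∑ v, ∑ w, if G.Adj v w then (f v - f w) ^ 2 else 0

/-- The Poincaré inequality for the stationary distribution of the random walk on `G`. The variance
is written as a double sum, and probabilities are multiplied by `degreeSum G`. -/
def PoincareInequality (Λ : ℝ) : Prop :=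
  ∀ f : V → ℝ, ∑ v, ∑ w, (G.degree v * G.degree w : ℝ) * (f v - f w) ^ 2 ≤ Λ * dirichletEnergy G f

/-- The lazy walk on `G` is `ε`-mixed at time `t`: from every starting point, its law at time `t` is
within `ε` of the stationary distribution in total variation. -/
def IsMixed (ε : ℝ) (t : ℕ) : Prop :=
  ∀ x, tvDist ((lazyWalk G ^ t) x) (stationary G) ≤ ε

theorem lazyWalk_mulVec_apply (f : V → ℝ) (v : V) : (lazyWalk G *ᵥ f) v =
    1 / 2 * (f v + (G.degree v : ℝ)⁻¹ * (G.adjMatrix ℝ *ᵥ f) v) := by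
  rw [lazyWalk, Matrix.smul_mulVec, Matrix.add_mulVec, Matrix.one_mulVec, ← Matrix.mulVec_mulVec]
  simp only [Pi.smul_apply, Pi.add_apply, Matrix.mulVec_diagonal, smul_eq_mul]

theorem sum_adjMatrix_mulVec (f : V → ℝ) :
    ∑ v, (G.adjMatrix ℝ *ᵥ f) v = ∑ v, G.degree v * f v :=
  calc ∑ v, (G.adjMatrix ℝ *ᵥ f) v = 1 ⬝ᵥ G.adjMatrix ℝ *ᵥ f := (one_dotProduct _).symm
    _ = (G.adjMatrix ℝ *ᵥ 1) ⬝ᵥ f := by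
        rw [Matrix.dotProduct_mulVec, ← Matrix.mulVec_transpose, G.transpose_adjMatrix]
    _ = ∑ v, G.degree v * f v := sum_congr rfl fun v _ => by
        simp [SimpleGraph.adjMatrix_mulVec_apply]

theorem sq_adjMatrix_mulVec_le (f : V → ℝ) (v : V) :
    (G.adjMatrix ℝ *ᵥ f) v ^ 2 ≤ G.degree v * (G.adjMatrix ℝ *ᵥ f ^ 2) v := by
  simp only [SimpleGraph.adjMatrix_mulVec_apply, ← SimpleGraph.card_neighborFinset_eq_degree]
  exact sq_sum_le_card_mul_sum_sq

theorem dirichletEnergy_eq (f : V → ℝ) : dirichletEnergy G f =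
    2 * (∑ v, G.degree v * f v ^ 2 - ∑ v, f v * (G.adjMatrix ℝ *ᵥ f) v) := by
  have hlap := SimpleGraph.lapMatrix_toLinearMap₂' ℝ G f
  rw [Matrix.toLinearMap₂'_apply', SimpleGraph.lapMatrix, Matrix.sub_mulVec,
    dotProduct_sub] at hlap
  have hdeg : f ⬝ᵥ G.degMatrix ℝ *ᵥ f = ∑ v, G.degree v * f v ^ 2 := sum_congr rfl fun v _ => by
    rw [SimpleGraph.degMatrix, Matrix.mulVec_diagonal]
    ring
  rw [← hdeg]
  exact ((div_eq_iff two_ne_zero).1 hlap.symm).trans (mul_comm _ _)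

variable {G}

theorem sum_degree_mul_lazyWalk_mulVec (hd : ∀ v, 0 < G.degree v) (f : V → ℝ) :
    ∑ v, G.degree v * (lazyWalk G *ᵥ f) v = ∑ v, G.degree v * f v := by
  have hpoint : ∀ v, (G.degree v : ℝ) * (lazyWalk G *ᵥ f) v =
      1 / 2 * (G.degree v * f v) + 1 / 2 * (G.adjMatrix ℝ *ᵥ f) v := fun v => by
    have : (G.degree v : ℝ) ≠ 0 := mod_cast (hd v).ne'
    rw [lazyWalk_mulVec_apply]
    field_simp
  simp only [hpoint, sum_add_distrib, ← mul_sum, sum_adjMatrix_mulVec]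
  ring

theorem sum_degree_mul_lazyWalk_mulVec_sq_le (hd : ∀ v, 0 < G.degree v) (f : V → ℝ) :
    ∑ v, G.degree v * (lazyWalk G *ᵥ f) v ^ 2 ≤
      ∑ v, G.degree v * f v ^ 2 - 1 / 4 * dirichletEnergy G f := by
  have hpoint : ∀ v, (G.degree v : ℝ) * (lazyWalk G *ᵥ f) v ^ 2 ≤ 1 / 4 * (G.degree v * f v ^ 2) +
      1 / 2 * (f v * (G.adjMatrix ℝ *ᵥ f) v) + 1 / 4 * (G.adjMatrix ℝ *ᵥ f ^ 2) v := fun v => by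
    have hpos : (0 : ℝ) < G.degree v := mod_cast hd v
    have hsq : (G.degree v : ℝ)⁻¹ * (G.adjMatrix ℝ *ᵥ f) v ^ 2 ≤ (G.adjMatrix ℝ *ᵥ f ^ 2) v :=
      (inv_mul_le_iff₀ hpos).2 (sq_adjMatrix_mulVec_le G f v)
    rw [lazyWalk_mulVec_apply]
    calc _ = 1 / 4 * (G.degree v * f v ^ 2) + 1 / 2 * (f v * (G.adjMatrix ℝ *ᵥ f) v) +
          1 / 4 * ((G.degree v : ℝ)⁻¹ * (G.adjMatrix ℝ *ᵥ f) v ^ 2) := by field_simp; ring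
      _ ≤ _ := by gcongr
  refine (sum_le_sum fun v _ => hpoint v).trans_eq ?_
  simp only [dirichletEnergy_eq, sum_add_distrib, ← mul_sum, sum_adjMatrix_mulVec, Pi.pow_apply]
  ring

theorem sum_sum_degree_mul_sq_sub {f : V → ℝ} (hf : ∑ v, G.degree v * f v = 0) :
    ∑ v, ∑ w, (G.degree v * G.degree w : ℝ) * (f v - f w) ^ 2 =
      2 * degreeSum G * ∑ v, G.degree v * f v ^ 2 := by
  have hexpand : ∀ v w, (G.degree v * G.degree w : ℝ) * (f v - f w) ^ 2 =
      (G.degree v * f v ^ 2) * G.degree w + G.degree v * (G.degree w * f w ^ 2) -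
        2 * ((G.degree v * f v) * (G.degree w * f w)) := fun v w => by ring
  simp only [hexpand, sum_sub_distrib, sum_add_distrib, ← mul_sum, ← sum_mul, hf, degreeSum]
  ring

namespace PoincareInequality

variable {Λ : ℝ} {f : V → ℝ}

theorem sum_degree_mul_lazyWalk_mulVec_sq_le_exp (hP : PoincareInequality G Λ) (hΛ : 0 < Λ)
    (hd : ∀ v, 0 < G.degree v) (hf : ∑ v, G.degree v * f v = 0) :
    ∑ v, G.degree v * (lazyWalk G *ᵥ f) v ^ 2 ≤
      Real.exp (-(degreeSum G / (2 * Λ))) * ∑ v, G.degree v * f v ^ 2 := by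
  have hgap := hP f
  rw [sum_sum_degree_mul_sq_sub hf] at hgap
  set N := ∑ v, G.degree v * f v ^ 2
  have : 0 ≤ N := sum_nonneg fun v _ => by positivity
  calc ∑ v, G.degree v * (lazyWalk G *ᵥ f) v ^ 2 ≤ N - 1 / 4 * dirichletEnergy G f :=
        sum_degree_mul_lazyWalk_mulVec_sq_le hd f
    _ ≤ N - 1 / 4 * (2 * degreeSum G * N / Λ) := by
        gcongr
        exact (div_le_iff₀' hΛ).2 hgap
    _ = (-(degreeSum G / (2 * Λ)) + 1) * N := by field_simp; ring
    _ ≤ Real.exp (-(degreeSum G / (2 * Λ))) * N := by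
        gcongr
        exact Real.add_one_le_exp _

theorem sum_degree_mul_lazyWalk_pow_mulVec_sq_le_exp (hP : PoincareInequality G Λ) (hΛ : 0 < Λ)
    (hd : ∀ v, 0 < G.degree v) (hf : ∑ v, G.degree v * f v = 0) (t : ℕ) :
    ∑ v, G.degree v * (lazyWalk G ^ t *ᵥ f) v ^ 2 ≤
      Real.exp (-(t * (degreeSum G / (2 * Λ)))) * ∑ v, G.degree v * f v ^ 2 := by
  induction t generalizing f with
  | zero => simp
  | succ t ih =>
    rw [pow_succ, ← Matrix.mulVec_mulVec]
    refine (ih ((sum_degree_mul_lazyWalk_mulVec hd f).trans hf)).trans ?_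
    refine (mul_le_mul_of_nonneg_left
      (hP.sum_degree_mul_lazyWalk_mulVec_sq_le_exp hΛ hd hf) (Real.exp_pos _).le).trans_eq ?_
    rw [← mul_assoc, ← Real.exp_add]
    push_cast
    ring_nf

end PoincareInequality

theorem lazyWalk_pow_mulVec_const (hd : ∀ v, 0 < G.degree v) (c : ℝ) (t : ℕ) :
    lazyWalk G ^ t *ᵥ Function.const V c = Function.const V c := by
  induction t with
  | zero => rw [pow_zero, Matrix.one_mulVec]
  | succ t ih =>
    rw [pow_succ', ← Matrix.mulVec_mulVec, ih]
    funext v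
    have : (G.degree v : ℝ) ≠ 0 := mod_cast (hd v).ne'
    rw [lazyWalk_mulVec_apply, SimpleGraph.adjMatrix_mulVec_const_apply]
    simp only [Function.const_apply]
    field_simp
    ring

theorem degree_le_degreeSum (x : V) : (G.degree x : ℝ) ≤ degreeSum G :=
  single_le_sum (f := fun v => (G.degree v : ℝ)) (fun _ _ => Nat.cast_nonneg _) (mem_univ x)

theorem degreeSum_pos {x : V} (hx : 0 < G.degree x) : 0 < degreeSum G :=
  (Nat.cast_pos.2 hx).trans_le (degree_le_degreeSum x)

theorem stationary_eq (x : V) : stationary G x = G.degree x / degreeSum G := rfl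

theorem stationary_nonneg (x : V) : 0 ≤ stationary G x :=
  div_nonneg (Nat.cast_nonneg _) (sum_nonneg fun _ _ => Nat.cast_nonneg _)

theorem sum_stationary (hG : 0 < degreeSum G) : ∑ v, stationary G v = 1 := by
  simp only [stationary_eq, ← sum_div]
  exact div_self hG.ne'

theorem degreeSum_mul_dotProduct_stationary (hG : 0 < degreeSum G) (g : V → ℝ) :
    degreeSum G * (stationary G ⬝ᵥ g) = ∑ v, G.degree v * g v := by
  rw [dotProduct, mul_sum]
  refine sum_congr rfl fun v _ => ?_
  rw [stationary_eq]
  field_simp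

theorem sum_degree_mul_sub_mean (hG : 0 < degreeSum G) (g : V → ℝ) :
    ∑ v, G.degree v * (g v - stationary G ⬝ᵥ g) = 0 := by
  simp only [mul_sub, sum_sub_distrib, ← sum_mul]
  rw [← degreeSum_mul_dotProduct_stationary hG]
  exact sub_self _

theorem sum_degree_mul_sub_mean_sq_le (hG : 0 < degreeSum G) (g : V → ℝ) :
    ∑ v, G.degree v * (g v - stationary G ⬝ᵥ g) ^ 2 ≤ ∑ v, G.degree v * g v ^ 2 := by
  set m := stationary G ⬝ᵥ g with hm
  have hexpand : ∀ v, G.degree v * (g v - m) ^ 2 =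
      G.degree v * g v ^ 2 - 2 * m * (G.degree v * g v) + G.degree v * m ^ 2 := fun v => by ring
  have hmean := degreeSum_mul_dotProduct_stationary hG g
  have hvar : ∑ v, G.degree v * (g v - m) ^ 2 =
      ∑ v, G.degree v * g v ^ 2 - degreeSum G * m ^ 2 := by
    simp only [hexpand, sum_add_distrib, sum_sub_distrib, ← mul_sum, ← sum_mul, ← hmean, ← hm]
    rw [← degreeSum]
    ring
  rw [hvar]
  exact sub_le_self _ (by positivity)

theorem exists_two_mul_tvDist_eq_dotProduct (μ ν : V → ℝ) :
    ∃ g : V → ℝ, (∀ v, g v ^ 2 = 1) ∧ 2 * tvDist μ ν = (μ - ν) ⬝ᵥ g := by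
  refine ⟨fun v => if 0 ≤ μ v - ν v then 1 else -1, fun v => ?_, ?_⟩
  · dsimp only
    split_ifs <;> norm_num
  · rw [tvDist, ← mul_assoc, mul_one_div_cancel two_ne_zero, one_mul]
    refine sum_congr rfl fun v _ => ?_
    dsimp only [Pi.sub_apply]
    split_ifs with hv
    · rw [abs_of_nonneg hv, mul_one]
    · rw [abs_of_neg (not_le.1 hv), mul_neg_one]

theorem PoincareInequality.sq_two_mul_tvDist_lazyWalk_pow_le {Λ : ℝ} (hP : PoincareInequality G Λ)
    (hΛ : 0 < Λ) (hd : ∀ v, 0 < G.degree v) (t : ℕ) (x : V) :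
    (2 * tvDist ((lazyWalk G ^ t) x) (stationary G)) ^ 2 ≤
      degreeSum G * Real.exp (-(t * (degreeSum G / (2 * Λ)))) := by
  have hG := degreeSum_pos (hd x)
  obtain ⟨g, hg, hdual⟩ :=
    exists_two_mul_tvDist_eq_dotProduct ((lazyWalk G ^ t) x) (stationary G)
  set f : V → ℝ := g - Function.const V (stationary G ⬝ᵥ g) with hf
  have hvalue : 2 * tvDist ((lazyWalk G ^ t) x) (stationary G) = (lazyWalk G ^ t *ᵥ f) x := by
    rw [hdual, hf, Matrix.mulVec_sub, lazyWalk_pow_mulVec_const hd, sub_dotProduct]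
    rfl
  have hnorm : ∑ v, G.degree v * f v ^ 2 ≤ degreeSum G :=
    (sum_degree_mul_sub_mean_sq_le hG g).trans_eq (by simp only [hg, mul_one, degreeSum])
  rw [hvalue]
  calc (lazyWalk G ^ t *ᵥ f) x ^ 2 ≤ G.degree x * (lazyWalk G ^ t *ᵥ f) x ^ 2 :=
        le_mul_of_one_le_left (sq_nonneg _) (Nat.one_le_cast.2 (hd x))
    _ ≤ ∑ v, G.degree v * (lazyWalk G ^ t *ᵥ f) v ^ 2 :=
        single_le_sum (f := fun v => (G.degree v : ℝ) * (lazyWalk G ^ t *ᵥ f) v ^ 2)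
          (fun v _ => by positivity) (mem_univ x)
    _ ≤ Real.exp (-(t * (degreeSum G / (2 * Λ)))) * ∑ v, G.degree v * f v ^ 2 :=
        hP.sum_degree_mul_lazyWalk_pow_mulVec_sq_le_exp hΛ hd (sum_degree_mul_sub_mean hG g) t
    _ ≤ _ := by
        rw [mul_comm]
        gcongr

theorem PoincareInequality.isMixed {Λ ε : ℝ} {t : ℕ} (hP : PoincareInequality G Λ)
    (hΛ : 0 < Λ) (hd : ∀ v, 0 < G.degree v) (hε : 0 < ε)
    (ht : 2 * Λ * Real.log (degreeSum G / ε ^ 2) ≤ t * degreeSum G) : IsMixed G ε t := fun x => by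
  have hG := degreeSum_pos (hd x)
  have hlog : Real.log (degreeSum G / ε ^ 2) ≤ t * (degreeSum G / (2 * Λ)) := by
    rw [← mul_div_assoc]
    exact (le_div_iff₀' (by positivity)).2 ht
  have hsq : (2 * tvDist ((lazyWalk G ^ t) x) (stationary G)) ^ 2 ≤ ε ^ 2 :=
    calc _ ≤ degreeSum G * Real.exp (-(t * (degreeSum G / (2 * Λ)))) :=
          hP.sq_two_mul_tvDist_lazyWalk_pow_le hΛ hd t x
      _ ≤ degreeSum G * Real.exp (-Real.log (degreeSum G / ε ^ 2)) := by gcongr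
      _ = ε ^ 2 := by
          rw [Real.exp_neg, Real.exp_log (by positivity)]
          field_simp
  linarith [(abs_le.1 (abs_le_of_sq_le_sq hsq hε.le)).2]

theorem tvDist_single {ν : V → ℝ} (hν : ∀ v, 0 ≤ ν v) (hsum : ∑ v, ν v = 1) (x : V) :
    tvDist (Pi.single x 1) ν = 1 - ν x := by
  have hle : ν x ≤ 1 := hsum ▸ single_le_sum (fun v _ => hν v) (mem_univ x)
  have habs : ∀ v, |(Pi.single x 1 : V → ℝ) v - ν v| = ν v + if v = x then 1 - 2 * ν x else 0 :=
    fun v => by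
      split_ifs with hv
      · rw [hv, Pi.single_eq_same, abs_of_nonneg (by linarith)]
        ring
      · rw [Pi.single_eq_of_ne hv, zero_sub, abs_neg, abs_of_nonneg (hν v), add_zero]
  simp only [tvDist, habs, sum_add_distrib, hsum, sum_ite_eq', mem_univ, if_true]
  ring

theorem isMixed_half_zero (hd : ∀ v, 0 < G.degree v) (hG : degreeSum G ≤ 2) :
    IsMixed G (1 / 2) 0 := fun x => by
  have hpos := degreeSum_pos (hd x)
  have hx : 1 / 2 ≤ stationary G x := by
    have : (1 : ℝ) ≤ G.degree x := Nat.one_le_cast.2 (hd x)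
    rw [stationary_eq, le_div_iff₀ hpos]
    linarith
  have hstart : (lazyWalk G ^ 0) x = Pi.single x 1 := funext fun v => by
    rw [pow_zero, Matrix.one_apply, Pi.single_apply]
    exact if_congr eq_comm rfl rfl
  rw [hstart, tvDist_single stationary_nonneg (sum_stationary hpos)]
  linarith

theorem IsMixed.mono {ε ε' : ℝ} {t : ℕ} (ht : IsMixed G ε t) (hε : ε ≤ ε') : IsMixed G ε' t :=
  fun x => (ht x).trans hε

theorem IsMixed.exists_isMixingTime {ε : ℝ} {s : ℕ} (hs : IsMixed G ε s) :
    ∃ t, IsMixingTime G ε t ∧ t ≤ s :=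
  have hex : ∃ t, IsMixed G ε t := ⟨s, hs⟩
  ⟨Nat.find hex, ⟨Nat.find_spec hex, fun _ ht => Nat.find_min' hex ht⟩, Nat.find_min' hex hs⟩

end LazyWalk

/-! ### Mixing on the chamber graph -/

namespace Arrangement

namespace GeneralPosition

section

variable {d n : ℕ} {𝓗 : Arrangement d n} (hg : 𝓗.GeneralPosition)
include hg

open Classical in
theorem sum_adj_eq_sum_darts (hd : 2 ≤ d) {φ : 𝓗.chambers → 𝓗.chambers → ℝ}
    {Φ : (Fin n → Bool) × Fin n → ℝ}
    (hΦ : ∀ C C' k, 𝓗.side C' = flipAt (𝓗.side C) k → φ C C' = Φ (𝓗.side C, k)) :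
    ∑ C, ∑ C', (if 𝓗.chamberGraph.Adj C C' then φ C C' else 0) = ∑ x ∈ 𝓗.darts, Φ x := by
  rw [← Fintype.sum_prod_type' (f := fun C C' => if 𝓗.chamberGraph.Adj C C' then φ C C' else 0),
    ← sum_filter]
  symm
  refine sum_bij (fun x hx => (chamberOf (mem_darts.1 hx).1, chamberOf (mem_darts.1 hx).2))
    (fun x hx => ?_) (fun x hx y hy hxy => ?_) (fun p hp => ?_) (fun x hx => ?_)
  · exact (mem_filter_univ _).2 (chamberGraph_adj_of_side_eq_flipAt (k := x.2) (by simp))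
  · have hfst := congrArg 𝓗.side (Prod.mk.inj hxy).1
    have hsnd := congrArg 𝓗.side (Prod.mk.inj hxy).2
    simp only [side_chamberOf] at hfst hsnd
    exact Prod.ext hfst (flipAt_injective _ (by rwa [hfst] at hsnd))
  · obtain ⟨k, hk⟩ :=
      exists_side_eq_flipAt_of_adj (hg.eq_of_hyperplane_le hd) ((mem_filter_univ p).1 hp)
    exact ⟨(𝓗.side p.1, k), mem_darts.2 ⟨realizable_side p.1, hk ▸ realizable_side p.2⟩,
      Prod.ext (side_injective (by simp)) (side_injective (by simp [hk]))⟩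
  · simp [hΦ _ _ x.2]

open Classical in
theorem sum_degree_mul_eq_sum_darts (hd : 2 ≤ d) (Φ : (Fin n → Bool) → ℝ) :
    ∑ C, (𝓗.chamberGraph.degree C : ℝ) * Φ (𝓗.side C) = ∑ x ∈ 𝓗.darts, Φ x.1 := by
  rw [← hg.sum_adj_eq_sum_darts hd (φ := fun C _ => Φ (𝓗.side C)) (fun _ _ _ _ => rfl)]
  refine sum_congr rfl fun C _ => ?_
  rw [← sum_filter, sum_const, nsmul_eq_mul, ← SimpleGraph.neighborFinset_eq_filter,
    SimpleGraph.card_neighborFinset_eq_degree]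

theorem degreeSum_chamberGraph (hd : 2 ≤ d) : degreeSum 𝓗.chamberGraph = #𝓗.darts := by
  simpa [degreeSum] using hg.sum_degree_mul_eq_sum_darts hd fun _ => 1

theorem dirichletEnergy_chamberGraph (hd : 2 ≤ d) (F : (Fin n → Bool) → ℝ) :
    dirichletEnergy 𝓗.chamberGraph (F ∘ 𝓗.side) = 𝓗.energy F :=
  hg.sum_adj_eq_sum_darts hd fun C C' k hk => by
    simp only [flipEnergy, Function.comp_apply, hk]

open Classical in
theorem sum_sum_degree_mul_sq_sub_chamberGraph (hd : 2 ≤ d) (F : (Fin n → Bool) → ℝ) :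
    ∑ C, ∑ C', (𝓗.chamberGraph.degree C * 𝓗.chamberGraph.degree C' : ℝ) *
        (F (𝓗.side C) - F (𝓗.side C')) ^ 2 =
      ∑ x ∈ 𝓗.darts, ∑ y ∈ 𝓗.darts, (F x.1 - F y.1) ^ 2 := by
  rw [← hg.sum_degree_mul_eq_sum_darts hd fun σ => ∑ y ∈ 𝓗.darts, (F σ - F y.1) ^ 2]
  refine sum_congr rfl fun C _ => ?_
  rw [← hg.sum_degree_mul_eq_sum_darts hd fun τ => (F (𝓗.side C) - F τ) ^ 2, mul_sum]
  exact sum_congr rfl fun C' _ => mul_assoc _ _ _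

open Classical in
theorem degree_chamberGraph_pos (hd : 1 ≤ d) (hn : 1 ≤ n) (C : 𝓗.chambers) :
    0 < 𝓗.chamberGraph.degree C := by
  obtain ⟨k, hk⟩ := hg.exists_realizable_flipAt hd hn (realizable_side C)
  exact (SimpleGraph.degree_pos_iff_exists_adj ..).2
    ⟨chamberOf hk, chamberGraph_adj_of_side_eq_flipAt (k := k) (side_chamberOf hk)⟩

end

variable {n : ℕ} {𝓗 : Arrangement 3 n} {ε : ℝ} (hg : 𝓗.GeneralPosition)
include hg

theorem poincareInequality_chamberGraph :
    PoincareInequality 𝓗.chamberGraph (10 ^ 9 * n ^ 5) := fun f => by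
  obtain ⟨F, rfl⟩ : ∃ F, f = F ∘ 𝓗.side :=
    ⟨Function.extend 𝓗.side f 0, (Function.extend_comp side_injective f 0).symm⟩
  rw [hg.dirichletEnergy_chamberGraph (by norm_num)]
  exact (hg.sum_sum_degree_mul_sq_sub_chamberGraph (by norm_num) F).trans_le hg.sum_sq_sub_darts_le

theorem log_degreeSum_div_sq_le (hn : 1 ≤ n) (hε : 0 < ε) (hε1 : ε ≤ 1) (hnε : 2 ≤ n / ε) :
    Real.log (degreeSum 𝓗.chamberGraph / ε ^ 2) ≤ 8 * Real.log (n / ε) := by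
  have hlower : (n : ℝ) ^ 3 ≤ 9 * degreeSum 𝓗.chamberGraph := by
    rw [hg.degreeSum_chamberGraph (by norm_num)]
    exact_mod_cast hg.pow_three_le_nine_mul_card_darts
  have hupper : degreeSum 𝓗.chamberGraph ≤ 24 * (n : ℝ) ^ 3 := by
    rw [hg.degreeSum_chamberGraph (by norm_num)]
    exact_mod_cast hg.card_darts_le_pow_three
  have hpos : 0 < degreeSum 𝓗.chamberGraph := by
    have : (0 : ℝ) < n ^ 3 := by positivity
    linarith
  rw [show (8 : ℝ) = (8 : ℕ) by norm_num, ← Real.log_pow]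
  refine Real.log_le_log (by positivity) ?_
  calc degreeSum 𝓗.chamberGraph / ε ^ 2 ≤ 24 * (n : ℝ) ^ 3 / ε ^ 3 := by
        gcongr ?_ / ?_
        exact pow_le_pow_of_le_one hε.le hε1 (by norm_num)
    _ = 24 * (n / ε) ^ 3 := by rw [div_pow, mul_div_assoc]
    _ ≤ 2 ^ 5 * (n / ε) ^ 3 := by gcongr; norm_num
    _ ≤ (n / ε) ^ 5 * (n / ε) ^ 3 := by gcongr
    _ = (n / ε) ^ 8 := by rw [← pow_add]

theorem isMixed_chamberGraph (hn : 1 ≤ n) (hε : 0 < ε) (hε1 : ε ≤ 1) (hnε : 2 ≤ n / ε) {s : ℕ}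
    (hs : 144 * 10 ^ 9 * n ^ 2 * Real.log (n / ε) ≤ s) :
    IsMixed 𝓗.chamberGraph ε s := by
  refine hg.poincareInequality_chamberGraph.isMixed (by positivity)
    (hg.degree_chamberGraph_pos (by norm_num) hn) hε ?_
  have hlower : (n : ℝ) ^ 3 ≤ 9 * degreeSum 𝓗.chamberGraph := by
    rw [hg.degreeSum_chamberGraph (by norm_num)]
    exact_mod_cast hg.pow_three_le_nine_mul_card_darts
  have hL : 0 ≤ Real.log (n / ε) := Real.log_nonneg (by linarith)
  have hG : 0 ≤ degreeSum 𝓗.chamberGraph := sum_nonneg fun _ _ => Nat.cast_nonneg _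
  calc 2 * (10 ^ 9 * n ^ 5) * Real.log (degreeSum 𝓗.chamberGraph / ε ^ 2)
      ≤ 2 * (10 ^ 9 * n ^ 5) * (8 * Real.log (n / ε)) := by
        gcongr
        exact hg.log_degreeSum_div_sq_le hn hε hε1 hnε
    _ = 16 * 10 ^ 9 * n ^ 2 * Real.log (n / ε) * n ^ 3 := by ring
    _ ≤ 16 * 10 ^ 9 * n ^ 2 * Real.log (n / ε) * (9 * degreeSum 𝓗.chamberGraph) := by gcongr
    _ = 144 * 10 ^ 9 * n ^ 2 * Real.log (n / ε) * degreeSum 𝓗.chamberGraph := by ring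
    _ ≤ s * degreeSum 𝓗.chamberGraph := by gcongr

theorem isMixed_chamberGraph_zero (hn : 1 ≤ n) (hε : 0 < ε) (hε1 : ε ≤ 1) (hnε : n / ε < 2) :
    IsMixed 𝓗.chamberGraph ε 0 := by
  rw [div_lt_iff₀ hε] at hnε
  obtain rfl : n = 1 := by
    have : (n : ℝ) < 2 := by linarith
    exact le_antisymm (Nat.lt_succ_iff.1 (mod_cast this)) hn
  have hG : degreeSum 𝓗.chamberGraph ≤ 2 := by
    rw [hg.degreeSum_chamberGraph (by norm_num), hg.card_darts_of_le (by norm_num)]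
    norm_num
  refine (isMixed_half_zero (hg.degree_chamberGraph_pos (by norm_num) hn) hG).mono ?_
  rw [Nat.cast_one] at hnε
  linarith

theorem exists_isMixed_chamberGraph (hn : 1 ≤ n) (hε : 0 < ε) (hε1 : ε ≤ 1) :
    ∃ s : ℕ, s ≤ 10 ^ 12 * (n : ℝ) ^ 2 * Real.log (n / ε) ∧
      IsMixed 𝓗.chamberGraph ε s := by
  have hn' : (1 : ℝ) ≤ n := Nat.one_le_cast.2 hn
  have hL : 0 ≤ Real.log (n / ε) :=
    Real.log_nonneg ((one_le_div hε).2 (hε1.trans hn'))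
  rcases lt_or_ge (n / ε) 2 with hnε | hnε
  · refine ⟨0, ?_, hg.isMixed_chamberGraph_zero hn hε hε1 hnε⟩
    rw [Nat.cast_zero]
    positivity
  · refine ⟨⌈144 * 10 ^ 9 * (n : ℝ) ^ 2 * Real.log (n / ε)⌉₊, ?_,
      hg.isMixed_chamberGraph hn hε hε1 hnε (Nat.le_ceil _)⟩
    have hlog2 : Real.log 2 ≤ Real.log (n / ε) := Real.log_le_log two_pos hnε
    have hone : 1 ≤ 2 * ((n : ℝ) ^ 2 * Real.log (n / ε)) := by
      have : 1 / 2 ≤ Real.log (n / ε) := by linarith [Real.log_two_gt_d9]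
      nlinarith
    linarith [Nat.ceil_lt_add_one (a := 144 * 10 ^ 9 * (n : ℝ) ^ 2 * Real.log (n / ε))
      (by positivity)]

end GeneralPosition

end Arrangement

end

/-- For an absolute constant `c > 0`, the lazy simple random walk on the chamber graph of any
arrangement of `n ≥ 1` hyperplanes in general position in `ℝ³` has, for every `ε ∈ (0, 1)`, a
(finite) `ε`-mixing time, and it is at most `c * n ^ 2 * log (n / ε)`. -/
theorem stmt11 :
    ∃ c : ℝ, 0 < c ∧
      ∀ (n : ℕ) (𝓗 : Arrangement 3 n), 1 ≤ n → 𝓗.GeneralPosition →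
        ∀ ε : ℝ, 0 < ε → ε < 1 →
          ∃ t : ℕ, IsMixingTime 𝓗.chamberGraph ε t ∧
            (t : ℝ) ≤ c * (n : ℝ) ^ 2 * Real.log ((n : ℝ) / ε) := by
  refine ⟨10 ^ 12, by norm_num, fun n 𝓗 hn hg ε hε hε1 => ?_⟩
  obtain ⟨s, hs, hmix⟩ := hg.exists_isMixed_chamberGraph hn hε hε1.le
  obtain ⟨t, ht, hts⟩ := hmix.exists_isMixingTime
  exact ⟨t, ht, (Nat.cast_le.2 hts).trans hs⟩
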